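/- arXiv:1512.01201 — 9 statements merged into one kernel-verified Lean document; each statement's English description precedes it below -/
import Mathlib

section
/- (Definition/Proposition 3.1, elementary form) Let k be a finite field of cardinality q and characteristic p, and let Σ be a set of prime numbers. The following are equivalent: (1) there exists an integer n ≥ 1 such that for every finite family of pairs (ℓ_1, j_1), …, (ℓ_r, j_r) with each ℓ_i a prime in Σ ∖ {p} and each j_i ≥ 1, n does not divide the least common multiple of the multiplicative orders of q modulo ℓ_i^{j_i}; (2) there exist a prime number ℓ₀ and an integer N₀ ≥ 0 such that for every prime ℓ ∈ Σ ∖ {p} and every integer j ≥ 1, ℓ₀^{N₀} does not divide the multiplicative order of q modulo ℓ^j; (3) there exist a prime number ℓ₀ with ℓ₀ ∉ Σ ∖ {p} and an integer N₀ ≥ 0 such that for every prime ℓ ∈ Σ ∖ {p}, ℓ₀^{N₀} does not divide the multiplicative order of p modulo ℓ. -/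
/-!
The order of `b` modulo `ℓ ^ (j + 1)` divides `ℓ ^ j` times its order modulo `ℓ`, and for `1 < b`
prime to `ℓ` it tends to infinity with `j`, so it is divisible by arbitrarily high powers of `ℓ`.
A prime `ℓ₀` for which the powers of `ℓ₀` dividing the orders modulo all `ℓ ^ j` are bounded is
therefore not one of the `ℓ`, and for such an `ℓ₀` only the orders modulo `ℓ` itself matter.
Replacing `b` by `b ^ f` changes orders by at most a factor `f`. Finally, a nontrivial prime power
divides a least common multiple exactly when it divides one of the terms; hence, if every prime
power divides some order, then every positive integer divides a finite least common multiple.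
-/

section PrimePowers

variable {M : Type*} [CommMonoidWithZero M] [IsCancelMulZero M] {p a b x : M} {k m n : ℕ}

theorem pow_dvd_or_pow_dvd_of_pow_add_dvd_mul (hp : Prime p) (h : p ^ (m + n) ∣ a * b) :
    p ^ m ∣ a ∨ p ^ n ∣ b := by
  simp only [pow_dvd_iff_le_emultiplicity] at h ⊢
  rw [emultiplicity_mul hp] at h
  by_contra! hlt
  exact h.not_gt (mod_cast ENat.add_lt_add hlt.1 hlt.2)

theorem dvd_mul_pow_of_dvd_mul_pow_of_not_pow_dvd (hp : Prime p) (hx : x ∣ a * p ^ k)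
    (hn : ¬ p ^ n ∣ x) : x ∣ a * p ^ n := by
  obtain ⟨y, hy⟩ := hx
  obtain ⟨i, -, b, c, -, rfl, rfl, -⟩ := mul_eq_mul_prime_pow hp hy.symm
  have hin : i ≤ n := by
    by_contra! hni
    exact hn ((pow_dvd_pow p hni.le).mul_left b)
  exact mul_dvd_mul (dvd_mul_right b c) (pow_dvd_pow p hin)

end PrimePowers

section FiniteLcm

variable {ι : Type*} {g : ι → ℕ}

theorem exists_mem_pow_dvd_of_pow_dvd_lcm {ℓ n : ℕ} (hℓ : ℓ.Prime) (hn : 0 < n) {s : Finset ι}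
    (h : ℓ ^ n ∣ s.lcm g) : ∃ x ∈ s, ℓ ^ n ∣ g x := by
  by_cases hg : ∀ x ∈ s, g x ≠ 0
  · have hlcm : s.lcm g ≠ 0 := by simpa [Finset.lcm_eq_zero_iff] using hg
    rw [hℓ.pow_dvd_iff_le_factorization hlcm, Finset.factorization_lcm hg,
      Finset.le_sup_iff hn] at h
    obtain ⟨x, hx, hnx⟩ := h
    exact ⟨x, hx, (hℓ.pow_dvd_iff_le_factorization (hg x hx)).2 hnx⟩
  · push Not at hg
    obtain ⟨x, hx, hgx⟩ := hg
    exact ⟨x, hx, hgx ▸ dvd_zero _⟩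

theorem exists_subset_dvd_lcm {T : Set ι}
    (h : ∀ ℓ k : ℕ, ℓ.Prime → ∃ x ∈ T, ℓ ^ k ∣ g x) {n : ℕ} (hn : n ≠ 0) :
    ∃ s : Finset ι, (∀ x ∈ s, x ∈ T) ∧ n ∣ s.lcm g := by
  classical
  induction n using Nat.recOnPrimeCoprime with
  | zero => exact absurd rfl hn
  | prime_pow ℓ k hℓ =>
    obtain ⟨x, hxT, hx⟩ := h ℓ k hℓ
    exact ⟨{x}, by simpa using hxT, by simpa using hx⟩
  | coprime a b _ _ hab iha ihb =>
    obtain ⟨s, hsT, hs⟩ := iha (left_ne_zero_of_mul hn)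
    obtain ⟨t, htT, ht⟩ := ihb (right_ne_zero_of_mul hn)
    refine ⟨s ∪ t, fun x hx ↦ (Finset.mem_union.1 hx).elim (hsT x) (htT x), ?_⟩
    exact hab.mul_dvd_of_dvd_of_dvd (hs.trans (Finset.lcm_mono Finset.subset_union_left))
      (ht.trans (Finset.lcm_mono Finset.subset_union_right))

theorem exists_forall_not_dvd_lcm_iff {T : Set ι} :
    (∃ n : ℕ, 1 ≤ n ∧ ∀ s : Finset ι, (∀ x ∈ s, x ∈ T) → ¬ n ∣ s.lcm g) ↔
      ∃ ℓ N : ℕ, ℓ.Prime ∧ ∀ x ∈ T, ¬ ℓ ^ N ∣ g x := by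
  constructor
  · rintro ⟨n, hn, hlcm⟩
    by_contra! hdvd
    obtain ⟨s, hsT, hs⟩ := exists_subset_dvd_lcm hdvd (Nat.one_le_iff_ne_zero.1 hn)
    exact hlcm s hsT hs
  · rintro ⟨ℓ, N, hℓ, hT⟩
    refine ⟨ℓ ^ (N + 1), Nat.one_le_pow _ _ hℓ.pos, fun s hsT hs ↦ ?_⟩
    obtain ⟨x, hxs, hx⟩ := exists_mem_pow_dvd_of_pow_dvd_lcm hℓ N.succ_pos hs
    exact hT x (hsT x hxs) ((pow_dvd_pow ℓ N.le_succ).trans hx)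

end FiniteLcm

theorem pow_dvd_orderOf_pow_of_pow_add_dvd_orderOf {M : Type*} [Monoid M] {x : M} {ℓ f N : ℕ}
    (hℓ : ℓ.Prime) (hf : 0 < f) (h : ℓ ^ (f + N) ∣ orderOf x) : ℓ ^ N ∣ orderOf (x ^ f) := by
  have horder : orderOf x ∣ f * orderOf (x ^ f) := by
    rw [orderOf_dvd_iff_pow_eq_one, pow_mul, pow_orderOf_eq_one]
  have hnot_dvd : ¬ ℓ ^ f ∣ f := Nat.not_dvd_of_pos_of_lt hf (Nat.lt_pow_self hℓ.one_lt)
  exact (pow_dvd_or_pow_dvd_of_pow_add_dvd_mul hℓ.prime (h.trans horder)).resolve_left hnot_dvd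

section OrderModPrimePower

theorem natCast_zmod_pow_eq_one_iff_dvd {n a e : ℕ} :
    (a : ZMod n) ^ e = 1 ↔ (n : ℤ) ∣ (a : ℤ) ^ e - 1 := by
  rw [← ZMod.intCast_zmod_eq_zero_iff_dvd, Int.cast_sub, sub_eq_zero, Int.cast_pow,
    Int.cast_natCast, Int.cast_one]

theorem lt_pow_of_natCast_zmod_pow_eq_one {n a e : ℕ} (ha : 1 < a) (he : e ≠ 0)
    (h : (a : ZMod n) ^ e = 1) : n < a ^ e := by
  have hpos : (1 : ℤ) < (a : ℤ) ^ e := mod_cast Nat.one_lt_pow he ha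
  have hle := Int.le_of_dvd (sub_pos.2 hpos) (natCast_zmod_pow_eq_one_iff_dvd.1 h)
  exact_mod_cast Int.lt_of_le_sub_one hle

theorem orderOf_natCast_zmod_pow_succ_dvd (a ℓ j : ℕ) :
    orderOf (a : ZMod (ℓ ^ (j + 1))) ∣ orderOf (a : ZMod ℓ) * ℓ ^ j := by
  have hℓ := natCast_zmod_pow_eq_one_iff_dvd.1 (pow_orderOf_eq_one (a : ZMod ℓ))
  rw [orderOf_dvd_iff_pow_eq_one, natCast_zmod_pow_eq_one_iff_dvd, pow_mul]
  simpa only [one_pow, Nat.cast_pow] using dvd_sub_pow_of_dvd_sub hℓ j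

theorem pow_dvd_orderOf_natCast_zmod_of_ne {a ℓ₀ ℓ j N : ℕ} (hℓ₀ : ℓ₀.Prime) (hℓ : ℓ.Prime)
    (hne : ℓ₀ ≠ ℓ) (h : ℓ₀ ^ N ∣ orderOf (a : ZMod (ℓ ^ (j + 1)))) :
    ℓ₀ ^ N ∣ orderOf (a : ZMod ℓ) :=
  (Nat.coprime_pow_primes N j hℓ₀ hℓ hne).dvd_of_dvd_mul_right
    (h.trans (orderOf_natCast_zmod_pow_succ_dvd a ℓ j))

theorem exists_pow_dvd_orderOf_natCast_zmod_pow {a ℓ : ℕ} (hℓ : ℓ.Prime) (ha : 1 < a)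
    (hcop : a.Coprime ℓ) (N : ℕ) : ∃ j, ℓ ^ N ∣ orderOf (a : ZMod (ℓ ^ (j + 1))) := by
  by_contra! hN
  have : NeZero ℓ := ⟨hℓ.ne_zero⟩
  set e := orderOf (a : ZMod ℓ) * ℓ ^ N
  have hunit : IsUnit (a : ZMod ℓ) := (ZMod.isUnit_iff_coprime a ℓ).2 hcop
  have he : e ≠ 0 :=
    mul_ne_zero (isOfFinOrder_iff_isUnit.2 hunit).orderOf_pos.ne' (pow_ne_zero N hℓ.ne_zero)
  have hpow (j : ℕ) : (a : ZMod (ℓ ^ (j + 1))) ^ e = 1 :=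
    orderOf_dvd_iff_pow_eq_one.1 <| dvd_mul_pow_of_dvd_mul_pow_of_not_pow_dvd hℓ.prime
      (orderOf_natCast_zmod_pow_succ_dvd a ℓ j) (hN j)
  have hbound : ℓ ^ (a ^ e + 1) < a ^ e := lt_pow_of_natCast_zmod_pow_eq_one ha he (hpow _)
  have hgrowth : a ^ e + 1 < ℓ ^ (a ^ e + 1) := Nat.lt_pow_self hℓ.one_lt
  omega

end OrderModPrimePower

theorem small_set_characterizations_general {b q f : ℕ} (hb : 1 < b) (hf : 0 < f)
    (hq : q = b ^ f) {T : Set ℕ} (hT : ∀ ℓ ∈ T, ℓ.Prime → b.Coprime ℓ) :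
    ((∃ n : ℕ, 1 ≤ n ∧ ∀ s : Finset (ℕ × ℕ), (∀ x ∈ s, x.1.Prime ∧ x.1 ∈ T ∧ 1 ≤ x.2) →
        ¬ n ∣ s.lcm (fun x ↦ orderOf (q : ZMod (x.1 ^ x.2)))) ↔
      ∃ ℓ₀ N₀ : ℕ, ℓ₀.Prime ∧ ∀ ℓ ∈ T, ℓ.Prime → ∀ j : ℕ, 1 ≤ j →
        ¬ ℓ₀ ^ N₀ ∣ orderOf (q : ZMod (ℓ ^ j))) ∧
    ((∃ ℓ₀ N₀ : ℕ, ℓ₀.Prime ∧ ∀ ℓ ∈ T, ℓ.Prime → ∀ j : ℕ, 1 ≤ j →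
        ¬ ℓ₀ ^ N₀ ∣ orderOf (q : ZMod (ℓ ^ j))) ↔
      ∃ ℓ₀ N₀ : ℕ, ℓ₀.Prime ∧ ℓ₀ ∉ T ∧ ∀ ℓ ∈ T, ℓ.Prime →
        ¬ ℓ₀ ^ N₀ ∣ orderOf (b : ZMod ℓ)) := by
  subst hq
  refine ⟨?_, ?_, ?_⟩
  · have hlcm := exists_forall_not_dvd_lcm_iff
      (g := fun x : ℕ × ℕ ↦ orderOf ((b ^ f : ℕ) : ZMod (x.1 ^ x.2)))
      (T := {x | x.1.Prime ∧ x.1 ∈ T ∧ 1 ≤ x.2})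
    refine hlcm.trans <| exists₂_congr fun ℓ₀ N₀ ↦ and_congr_right fun _ ↦ ?_
    exact ⟨fun h ℓ hℓT hℓ j hj ↦ h (ℓ, j) ⟨hℓ, hℓT, hj⟩,
      fun h x hx ↦ h x.1 hx.2.1 hx.1 x.2 hx.2.2⟩
  · rintro ⟨ℓ₀, N₀, hℓ₀, h⟩
    refine ⟨ℓ₀, f + N₀, hℓ₀, fun hℓ₀T ↦ ?_, fun ℓ hℓT hℓ hdvd ↦ ?_⟩
    · obtain ⟨j, hj⟩ := exists_pow_dvd_orderOf_natCast_zmod_pow hℓ₀ (Nat.one_lt_pow hf.ne' hb)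
        ((hT ℓ₀ hℓ₀T hℓ₀).pow_left f) N₀
      exact h ℓ₀ hℓ₀T hℓ₀ (j + 1) j.succ_pos hj
    · have horder := pow_dvd_orderOf_pow_of_pow_add_dvd_orderOf hℓ₀ hf hdvd
      exact h ℓ hℓT hℓ 1 le_rfl (by rwa [pow_one, Nat.cast_pow])
  · rintro ⟨ℓ₀, N₀, hℓ₀, hℓ₀T, h⟩
    refine ⟨ℓ₀, N₀, hℓ₀, fun ℓ hℓT hℓ j hj hdvd ↦ h ℓ hℓT hℓ ?_⟩
    obtain ⟨i, rfl⟩ := Nat.exists_eq_add_of_le' hj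
    have hne : ℓ₀ ≠ ℓ := fun heq ↦ hℓ₀T (heq ▸ hℓT)
    have horder := pow_dvd_orderOf_natCast_zmod_of_ne hℓ₀ hℓ hne hdvd
    rw [Nat.cast_pow] at horder
    exact horder.trans (orderOf_pow_dvd f)

/-- **Definition/Proposition 3.1 (elementary form).** For a finite field `k` of cardinality
`q = p ^ f` and a set `S` of prime numbers, the three elementary conditions characterizing
`k`-smallness of `S` are equivalent. -/
theorem small_set_characterizations
    (p q f : ℕ) (hp : p.Prime) (hf : 0 < f) (hq : q = p ^ f) (S : Set ℕ) :
    ((∃ n : ℕ, 1 ≤ n ∧ ∀ s : Finset (ℕ × ℕ),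
        (∀ x ∈ s, x.1.Prime ∧ x.1 ∈ S ∧ x.1 ≠ p ∧ 1 ≤ x.2) →
        ¬ n ∣ s.lcm (fun x => orderOf ((q : ZMod (x.1 ^ x.2))))) ↔
      (∃ ℓ₀ N₀ : ℕ, ℓ₀.Prime ∧ ∀ ℓ ∈ S, ℓ.Prime → ℓ ≠ p → ∀ j : ℕ, 1 ≤ j →
        ¬ ℓ₀ ^ N₀ ∣ orderOf ((q : ZMod (ℓ ^ j))))) ∧
    ((∃ ℓ₀ N₀ : ℕ, ℓ₀.Prime ∧ ∀ ℓ ∈ S, ℓ.Prime → ℓ ≠ p → ∀ j : ℕ, 1 ≤ j →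
        ¬ ℓ₀ ^ N₀ ∣ orderOf ((q : ZMod (ℓ ^ j)))) ↔
      (∃ ℓ₀ N₀ : ℕ, ℓ₀.Prime ∧ ¬ (ℓ₀ ∈ S ∧ ℓ₀ ≠ p) ∧ ∀ ℓ ∈ S, ℓ.Prime → ℓ ≠ p →
        ¬ ℓ₀ ^ N₀ ∣ orderOf ((p : ZMod ℓ)))) := by
  simpa only [Set.mem_sdiff, Set.mem_singleton_iff, and_assoc, and_imp, imp.swap (a := _ ≠ p)] using
    small_set_characterizations_general hp.one_lt hf hq (T := S \ {p})
      fun ℓ hℓ hℓp ↦ (Nat.coprime_primes hp hℓp).2 (Ne.symm hℓ.2)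
end

section
/- (Proposition 3.3) Let k be a finite field of cardinality q and characteristic p, and let Σ be a set of prime numbers. Then: (a) if Primes ∖ Σ is finite, then Σ is k-large; (b) if Σ is k-large, then Σ is not k-small (i.e., Σ and Primes ∖ Σ are never both k-small); (c) if Σ is not k-small, then Σ is infinite. -/
/-- `S` is `k`-small, for `k` a finite field of cardinality `q` and characteristic `p`:
there exist a prime `ℓ₀` and `N₀ ≥ 0` such that for every prime `ℓ ∈ S ∖ {p}` and every
`j ≥ 1`, `ℓ₀ ^ N₀` does not divide the multiplicative order of `q` modulo `ℓ ^ j`. -/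
def IsSmallFor (q p : ℕ) (S : Set ℕ) : Prop :=
  ∃ ℓ₀ N₀ : ℕ, ℓ₀.Prime ∧ ∀ ℓ ∈ S, ℓ.Prime → ℓ ≠ p → ∀ j : ℕ, 1 ≤ j →
    ¬ ℓ₀ ^ N₀ ∣ orderOf ((q : ZMod (ℓ ^ j)))

/-- `S` is `k`-large if the complementary set of primes is `k`-small. -/
def IsLargeFor (q p : ℕ) (S : Set ℕ) : Prop :=
  IsSmallFor q p {ℓ : ℕ | ℓ.Prime ∧ ℓ ∉ S}

/-!
Finiteness of `S` gives smallness because a prime dividing the order of a unit modulo `ℓ ^ j` is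
at most `ℓ`: any prime `ℓ₀` beyond `S` is a witness.

That `S` and its complement are not both small rests on the fact that every `n ≥ 2` is the order
of `q` modulo some prime power `ℓ ^ j`: take a prime `ℓ` dividing `Φₙ(q)` and let `ℓ ^ j` be the
exact power of `ℓ` dividing `q ^ n - 1`. If the order `d` of `q` modulo `ℓ ^ j` were a proper
divisor of `n`, then `(q ^ d - 1) * Φₙ(q) ∣ q ^ n - 1` would give one more factor `ℓ`. Choosing `n`
divisible by both forbidden prime powers contradicts smallness on whichever side `ℓ` lies.
-/

open Polynomial

theorem intCast_zmod_pow_eq_one_iff (a : ℤ) (m n : ℕ) :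
    (a : ZMod m) ^ n = 1 ↔ (m : ℤ) ∣ a ^ n - 1 := by
  rw [← ZMod.intCast_zmod_eq_zero_iff_dvd, Int.cast_sub, Int.cast_pow, Int.cast_one, sub_eq_zero]

section CommRing

variable {R : Type*} [CommRing R]

theorem eval_cyclotomic_dvd_pow_sub_one (a : R) (n : ℕ) :
    (cyclotomic n R).eval a ∣ a ^ n - 1 := by
  simpa using eval_dvd (x := a) (cyclotomic.dvd_X_pow_sub_one n R)

theorem pow_sub_one_mul_eval_cyclotomic_dvd_pow_sub_one {d n : ℕ} (hd : d ∈ n.properDivisors)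
    (a : R) : (a ^ d - 1) * (cyclotomic n R).eval a ∣ a ^ n - 1 := by
  simpa using eval_dvd (x := a) (X_pow_sub_one_mul_cyclotomic_dvd_X_pow_sub_one_of_dvd R hd)

end CommRing

theorem orderOf_intCast_zmod_eq_of_dvd_eval_cyclotomic {a b : ℤ} {m n : ℕ}
    (hb : b ∣ (cyclotomic n ℤ).eval a) (hm : (m : ℤ) ∣ a ^ n - 1)
    (hmb : ¬ (m : ℤ) * b ∣ a ^ n - 1) : orderOf (a : ZMod m) = n := by
  have hn : 0 < n := by
    rw [Nat.pos_iff_ne_zero]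
    rintro rfl
    exact hmb (by simp)
  have order_dvd : orderOf (a : ZMod m) ∣ n :=
    orderOf_dvd_of_pow_eq_one ((intCast_zmod_pow_eq_one_iff a m n).2 hm)
  by_contra order_ne
  have order_mem : orderOf (a : ZMod m) ∈ n.properDivisors :=
    Nat.mem_properDivisors.2 ⟨order_dvd, (Nat.le_of_dvd hn order_dvd).lt_of_ne order_ne⟩
  have m_dvd : (m : ℤ) ∣ a ^ orderOf (a : ZMod m) - 1 :=
    (intCast_zmod_pow_eq_one_iff a m _).1 (pow_orderOf_eq_one _)
  exact hmb ((mul_dvd_mul m_dvd hb).trans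
    (pow_sub_one_mul_eval_cyclotomic_dvd_pow_sub_one order_mem a))

theorem exists_prime_dvd_eval_cyclotomic {q n : ℕ} (hq : 1 < q) (hn : 1 < n) :
    ∃ ℓ : ℕ, ℓ.Prime ∧ (ℓ : ℤ) ∣ (cyclotomic n ℤ).eval (q : ℤ) := by
  have eval_gt := sub_one_lt_natAbs_cyclotomic_eval hn hq.ne'
  obtain ⟨ℓ, hℓ, hdvd⟩ := Nat.exists_prime_and_dvd
    (n := ((cyclotomic n ℤ).eval (q : ℤ)).natAbs) (by lia)
  exact ⟨ℓ, hℓ, Int.natCast_dvd.2 hdvd⟩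

theorem exists_prime_pow_orderOf_natCast_zmod_eq {q n : ℕ} (hq : 1 < q) (hn : 1 < n) :
    ∃ ℓ j : ℕ, ℓ.Prime ∧ 1 ≤ j ∧ orderOf (q : ZMod (ℓ ^ j)) = n := by
  obtain ⟨ℓ, hℓ, hcyc⟩ := exists_prime_dvd_eval_cyclotomic hq hn
  have hdvd : (ℓ : ℤ) ∣ (q : ℤ) ^ n - 1 := hcyc.trans (eval_cyclotomic_dvd_pow_sub_one _ n)
  have hne : (q : ℤ) ^ n - 1 ≠ 0 :=
    sub_ne_zero.2 (one_lt_pow₀ (by exact_mod_cast hq) (by lia)).ne'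
  have hfin : FiniteMultiplicity (ℓ : ℤ) ((q : ℤ) ^ n - 1) :=
    Int.finiteMultiplicity_iff.2 ⟨hℓ.ne_one, hne⟩
  obtain ⟨j, hj_dvd, hj_not_dvd⟩ :
      ∃ j : ℕ, (ℓ : ℤ) ^ j ∣ (q : ℤ) ^ n - 1 ∧ ¬ (ℓ : ℤ) ^ (j + 1) ∣ (q : ℤ) ^ n - 1 :=
    ⟨_, pow_multiplicity_dvd _ _, hfin.not_pow_dvd_of_multiplicity_lt (Nat.lt_succ_self _)⟩
  have hj : j ≠ 0 := by
    rintro rfl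
    exact hj_not_dvd (by rwa [zero_add, pow_one])
  have horder : orderOf ((q : ℤ) : ZMod (ℓ ^ j)) = n :=
    orderOf_intCast_zmod_eq_of_dvd_eval_cyclotomic hcyc
      (by rwa [Nat.cast_pow]) (by rwa [Nat.cast_pow, ← pow_succ])
  exact ⟨ℓ, j, hℓ, Nat.one_le_iff_ne_zero.2 hj, by rwa [Int.cast_natCast] at horder⟩

theorem coprime_of_orderOf_natCast_zmod_ne_zero {q m : ℕ} (h : orderOf (q : ZMod m) ≠ 0) :
    q.Coprime m :=
  (ZMod.isUnit_iff_coprime q m).1 (IsUnit.of_pow_eq_one (pow_orderOf_eq_one _) h)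

theorem orderOf_natCast_zmod_dvd_totient {q m : ℕ} (h : q.Coprime m) :
    orderOf (q : ZMod m) ∣ m.totient :=
  orderOf_dvd_of_pow_eq_one <| by
    exact_mod_cast (ZMod.natCast_eq_natCast_iff _ _ _).2 (Nat.ModEq.pow_totient h)

theorem le_of_prime_dvd_totient_prime_pow {r ℓ j : ℕ} (hr : r.Prime) (hℓ : ℓ.Prime)
    (h : r ∣ (ℓ ^ j).totient) : r ≤ ℓ := by
  cases j with
  | zero => exact absurd (by simpa using h) hr.ne_one
  | succ i =>
    rw [Nat.totient_prime_pow_succ hℓ, hr.dvd_mul] at h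
    rcases h with h_pow | h_pred
    · exact Nat.le_of_dvd hℓ.pos (hr.dvd_of_dvd_pow h_pow)
    · exact (Nat.le_of_dvd (Nat.sub_pos_of_lt hℓ.one_lt) h_pred).trans (Nat.sub_le ℓ 1)

theorem IsSmallFor.of_finite {q p : ℕ} {S : Set ℕ} (hS : S.Finite)
    (hq : ∀ ℓ ∈ S, ℓ.Prime → ℓ ≠ p → q.Coprime ℓ) : IsSmallFor q p S := by
  obtain ⟨B, hB⟩ := hS.bddAbove
  obtain ⟨r, hBr, hr⟩ := Nat.exists_infinite_primes (B + 1)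
  refine ⟨r, 1, hr, fun ℓ hℓS hℓ hℓp j _ hdvd => ?_⟩
  have r_dvd_totient : r ∣ (ℓ ^ j).totient := by
    rw [pow_one] at hdvd
    exact hdvd.trans (orderOf_natCast_zmod_dvd_totient ((hq ℓ hℓS hℓ hℓp).pow_right j))
  have r_le_ℓ : r ≤ ℓ := le_of_prime_dvd_totient_prime_pow hr hℓ r_dvd_totient
  have ℓ_le_B : ℓ ≤ B := hB hℓS
  lia

theorem IsLargeFor.not_isSmallFor {q p : ℕ} {S : Set ℕ} (hq : 1 < q) (hpq : p ∣ q)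
    (hlarge : IsLargeFor q p S) : ¬ IsSmallFor q p S := by
  rintro ⟨b, B, hb, hsmall⟩
  obtain ⟨a, A, ha, hsmall_compl⟩ := hlarge
  have hpos : 0 < a ^ A * b ^ B := Nat.mul_pos (pow_pos ha.pos A) (pow_pos hb.pos B)
  -- The factor `2` covers the case `A = B = 0`, as order `1` does not occur for `q = 2`.
  obtain ⟨ℓ, j, hℓ, hj, horder⟩ :=
    exists_prime_pow_orderOf_natCast_zmod_eq (n := 2 * (a ^ A * b ^ B)) hq (by lia)
  have hcop : q.Coprime ℓ := (Nat.coprime_pow_right_iff hj q ℓ).1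
    (coprime_of_orderOf_natCast_zmod_ne_zero (by lia))
  have hℓp : ℓ ≠ p := by
    rintro rfl
    exact hℓ.ne_one (Nat.eq_one_of_dvd_coprimes hcop hpq dvd_rfl)
  by_cases hℓS : ℓ ∈ S
  · refine hsmall ℓ hℓS hℓ hℓp j hj (horder ▸ ?_)
    exact (Nat.dvd_mul_left _ _).mul_left 2
  · refine hsmall_compl ℓ ⟨hℓ, hℓS⟩ hℓ hℓp j hj (horder ▸ ?_)
    exact (Nat.dvd_mul_right _ _).mul_left 2

/-- **Proposition 3.3.** For a set `S` of prime numbers and a finite field of cardinality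
`q = p ^ f`: (a) if the set of primes outside `S` is finite then `S` is `k`-large;
(b) if `S` is `k`-large then `S` is not `k`-small; (c) if `S` is not `k`-small then `S`
is infinite. -/
theorem small_large_implications
    (p q f : ℕ) (hp : p.Prime) (hf : 0 < f) (hq : q = p ^ f)
    (S : Set ℕ) (hS : ∀ ℓ ∈ S, Nat.Prime ℓ) :
    ({ℓ : ℕ | ℓ.Prime ∧ ℓ ∉ S}.Finite → IsLargeFor q p S) ∧
    (IsLargeFor q p S → ¬ IsSmallFor q p S) ∧
    (¬ IsSmallFor q p S → S.Infinite) := by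
  have hcop : ∀ ℓ : ℕ, ℓ.Prime → ℓ ≠ p → q.Coprime ℓ := fun ℓ hℓ hℓp =>
    hq ▸ ((Nat.coprime_primes hp hℓ).2 hℓp.symm).pow_left f
  have one_lt_q : 1 < q := hq ▸ Nat.one_lt_pow hf.ne' hp.one_lt
  have p_dvd_q : p ∣ q := hq ▸ dvd_pow_self p hf.ne'
  exact ⟨fun hfin => IsSmallFor.of_finite hfin fun ℓ _ => hcop ℓ,
    IsLargeFor.not_isSmallFor one_lt_q p_dvd_q,
    fun not_small hfin => not_small (IsSmallFor.of_finite hfin fun ℓ _ => hcop ℓ)⟩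
end

section
/- (Remark 3.4.2: an infinite 𝔽_p-small set of primes) Let p and r be prime numbers with r ≠ p and r ∤ p − 1. Then: (a) for every integer m ≥ 0 there exists a prime number ℓ that divides p^{r^{m+1}} − 1 but does not divide p^{r^m} − 1; consequently the set Σ := {ℓ prime : ℓ divides p^{r^m} − 1 for some m ≥ 0} is infinite; (b) for every prime s ∈ Σ and every integer j ≥ 1, every prime divisor of the multiplicative order of p modulo s^j belongs to {r, s}; consequently Σ is 𝔽_p-small (the prime ℓ₀ = p and N₀ = 1 witness the smallness condition), although Σ is infinite. -/
/-!
Modulo `b - 1` the geometric sum `1 + b + ⋯ + b ^ (n - 1) = (b ^ n - 1) / (b - 1)` is `n`, so if `n`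
is prime to `b - 1` then every prime factor of the sum divides `b ^ n - 1` but not `b - 1`. For
`b = p ^ r ^ m` and `n = r`, Fermat's little theorem gives `b ≡ p` modulo `r`, so `r ∤ p - 1` makes
`r` prime to `b - 1`, and each step of the tower `p ^ r ^ m - 1` acquires a new prime.

If `p ^ r ^ m ≡ 1` modulo `s`, then raising to the power `s ^ j` lifts the congruence to `s ^ j`.
Hence the order of `p` modulo `s ^ j` divides `r ^ m * s ^ j`, which is prime to `p`.
-/

theorem geom_sum_modEq_of_modEq_one {b d : ℕ} (h : b ≡ 1 [MOD d]) (n : ℕ) :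
    ∑ i ∈ Finset.range n, b ^ i ≡ n [MOD d] := by
  rw [← ZMod.natCast_eq_natCast_iff] at h ⊢
  simp [h]

theorem exists_prime_dvd_pow_sub_one_not_dvd_sub_one {b n : ℕ} (hn : 1 < n)
    (hbn : (b - 1).Coprime n) : ∃ ℓ : ℕ, ℓ.Prime ∧ ℓ ∣ b ^ n - 1 ∧ ¬ ℓ ∣ b - 1 := by
  have hb : 1 < b := by
    by_contra! hb
    rw [Nat.sub_eq_zero_of_le hb, Nat.coprime_zero_left] at hbn
    exact hn.ne' hbn
  have sum_ne_one : ∑ i ∈ Finset.range n, b ^ i ≠ 1 := by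
    have sum_two_le : ∑ i ∈ Finset.range 2, b ^ i ≤ ∑ i ∈ Finset.range n, b ^ i :=
      Finset.sum_le_sum_of_subset (Finset.range_mono hn)
    rw [geom_sum_two] at sum_two_le
    lia
  obtain ⟨ℓ, hℓ, hℓ_sum⟩ := Nat.exists_prime_and_dvd sum_ne_one
  refine ⟨ℓ, hℓ, ?_, fun hℓ_sub => hℓ.ne_one ?_⟩
  · rw [← geom_sum_mul_of_one_le hb.le]
    exact hℓ_sum.mul_right _
  · have hb_modEq : b ≡ 1 [MOD ℓ] := ((Nat.modEq_iff_dvd' hb.le).mpr hℓ_sub).symm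
    have hℓn : ℓ ∣ n := ((geom_sum_modEq_of_modEq_one hb_modEq n).dvd_iff dvd_rfl).mp hℓ_sum
    exact Nat.eq_one_of_dvd_coprimes hbn hℓ_sub hℓn

theorem pow_prime_pow_modEq_self {r : ℕ} (hr : r.Prime) (a m : ℕ) : a ^ r ^ m ≡ a [MOD r] := by
  have : Fact r.Prime := ⟨hr⟩
  rw [← ZMod.natCast_eq_natCast_iff, Nat.cast_pow, ZMod.pow_card_pow]

theorem one_lt_of_not_dvd_sub_one {a r : ℕ} (h : ¬ r ∣ a - 1) : 1 < a := by
  by_contra! ha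
  exact h (Nat.sub_eq_zero_of_le ha ▸ dvd_zero r)

theorem coprime_pow_prime_pow_sub_one {a r : ℕ} (hr : r.Prime) (ha : ¬ r ∣ a - 1) (m : ℕ) :
    (a ^ r ^ m - 1).Coprime r := by
  refine (hr.coprime_iff_not_dvd.mpr fun h => ha ?_).symm
  have hpos : 0 < a := (one_lt_of_not_dvd_sub_one ha).pos
  rw [← Nat.modEq_iff_dvd' (Nat.pow_pos hpos)] at h
  rw [← Nat.modEq_iff_dvd' hpos]
  exact h.trans (pow_prime_pow_modEq_self hr a m)

theorem exists_prime_dvd_pow_prime_pow_succ_sub_one {a r : ℕ} (hr : r.Prime) (ha : ¬ r ∣ a - 1)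
    (m : ℕ) : ∃ ℓ : ℕ, ℓ.Prime ∧ ℓ ∣ a ^ r ^ (m + 1) - 1 ∧ ¬ ℓ ∣ a ^ r ^ m - 1 := by
  rw [pow_succ, pow_mul]
  exact exists_prime_dvd_pow_sub_one_not_dvd_sub_one hr.one_lt
    (coprime_pow_prime_pow_sub_one hr ha m)

theorem infinite_setOf_prime_dvd_of_forall_exists_new {f : ℕ → ℕ} (hf : ∀ m, f m ∣ f (m + 1))
    (hnew : ∀ m, ∃ ℓ : ℕ, ℓ.Prime ∧ ℓ ∣ f (m + 1) ∧ ¬ ℓ ∣ f m) :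
    {ℓ : ℕ | ℓ.Prime ∧ ∃ m, ℓ ∣ f m}.Infinite := by
  choose g g_prime g_dvd g_not_dvd using hnew
  have g_injective : g.Injective := .of_lt_imp_ne fun m n hmn heq =>
    g_not_dvd n (heq ▸ (g_dvd m).trans (Nat.rel_of_forall_rel_succ_of_le (· ∣ ·) hf hmn))
  exact Set.infinite_of_injective_forall_mem g_injective fun m => ⟨g_prime m, m + 1, g_dvd m⟩

theorem orderOf_natCast_zmod_pow_dvd {a n s : ℕ} (h : a ^ n ≡ 1 [MOD s]) (j : ℕ) :
    orderOf (a : ZMod (s ^ j)) ∣ n * s ^ j := by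
  have lifted : (s : ℤ) ^ (j + 1) ∣ ((a : ℤ) ^ n) ^ s ^ j - 1 ^ s ^ j :=
    dvd_sub_pow_of_dvd_sub (by exact_mod_cast h.symm.dvd) j
  have lifted_zmod : ((((a : ℤ) ^ n) ^ s ^ j - 1 : ℤ) : ZMod (s ^ j)) = 0 := by
    rw [ZMod.intCast_zmod_eq_zero_iff_dvd, Nat.cast_pow]
    simpa using (pow_dvd_pow _ j.le_succ).trans lifted
  apply orderOf_dvd_of_pow_eq_one
  rw [pow_mul]
  exact_mod_cast sub_eq_zero.mp (by simpa using lifted_zmod)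

/-- The primes occurring in the tower `a - 1 ∣ a ^ r - 1 ∣ a ^ r ^ 2 - 1 ∣ ⋯`; the paper's `Σ` is
`towerPrimes p r`. For `a = 0` truncated subtraction makes every prime a member. -/
def towerPrimes (a r : ℕ) : Set ℕ :=
  {ℓ : ℕ | ℓ.Prime ∧ ∃ m : ℕ, ℓ ∣ a ^ r ^ m - 1}

namespace towerPrimes

variable {a r s : ℕ}

theorem infinite (hr : r.Prime) (ha : ¬ r ∣ a - 1) : (towerPrimes a r).Infinite :=
  infinite_setOf_prime_dvd_of_forall_exists_new
    (fun m => Nat.pow_sub_one_dvd_pow_sub_one a (pow_dvd_pow r m.le_succ))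
    (exists_prime_dvd_pow_prime_pow_succ_sub_one hr ha)

theorem exists_pow_modEq_one (ha : 0 < a) (hs : s ∈ towerPrimes a r) :
    ∃ m, a ^ r ^ m ≡ 1 [MOD s] := by
  obtain ⟨-, m, hm⟩ := hs
  exact ⟨m, ((Nat.modEq_iff_dvd' (Nat.pow_pos ha)).mpr hm).symm⟩

theorem eq_or_eq_of_prime_dvd_orderOf (ha : 0 < a) (hr : r.Prime) (hs : s ∈ towerPrimes a r)
    {j t : ℕ} (ht : t.Prime) (h : t ∣ orderOf (a : ZMod (s ^ j))) : t = r ∨ t = s := by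
  obtain ⟨m, hm⟩ := exists_pow_modEq_one ha hs
  exact (ht.dvd_mul.mp (h.trans (orderOf_natCast_zmod_pow_dvd hm j))).imp
    (Nat.prime_eq_prime_of_dvd_pow ht hr) (Nat.prime_eq_prime_of_dvd_pow ht hs.1)

theorem coprime_of_mem (hr : r ≠ 0) (ha : 0 < a) (hs : s ∈ towerPrimes a r) : a.Coprime s := by
  obtain ⟨m, hm⟩ := exists_pow_modEq_one ha hs
  have pow_coprime : (a ^ r ^ m).Coprime s := hm.gcd_eq.trans s.gcd_one_left
  exact (Nat.coprime_pow_left_iff (pow_pos hr.bot_lt m) a s).mp pow_coprime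

theorem coprime_orderOf (ha : 0 < a) (hr : r.Prime) (hra : ¬ r ∣ a) (hs : s ∈ towerPrimes a r)
    (j : ℕ) : a.Coprime (orderOf (a : ZMod (s ^ j))) := by
  refine Nat.coprime_of_dvd fun t ht hta ht_order => ?_
  rcases eq_or_eq_of_prime_dvd_orderOf ha hr hs ht ht_order with rfl | rfl
  · exact hra hta
  · exact ht.ne_one (Nat.eq_one_of_dvd_coprimes (coprime_of_mem hr.ne_zero ha hs) hta dvd_rfl)

end towerPrimes

theorem isSmallFor_of_forall_coprime_orderOf {q : ℕ} (hq : q ≠ 1) {S : Set ℕ}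
    (hS : ∀ ℓ ∈ S, ∀ j : ℕ, q.Coprime (orderOf (q : ZMod (ℓ ^ j)))) (p : ℕ) :
    IsSmallFor q p S := by
  obtain ⟨ℓ₀, hℓ₀, hℓ₀q⟩ := Nat.exists_prime_and_dvd hq
  refine ⟨ℓ₀, 1, hℓ₀, fun ℓ hℓ _ _ j _ h => hℓ₀.ne_one ?_⟩
  rw [pow_one] at h
  exact Nat.eq_one_of_dvd_coprimes (hS ℓ hℓ j) hℓ₀q h

theorem infinite_small_set_general (q r : ℕ) (hr : r.Prime) (hrq : ¬ r ∣ q) (hr1 : ¬ r ∣ q - 1) :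
    (∀ m : ℕ, ∃ ℓ : ℕ, ℓ.Prime ∧ ℓ ∣ q ^ r ^ (m + 1) - 1 ∧ ¬ ℓ ∣ q ^ r ^ m - 1) ∧
    (towerPrimes q r).Infinite ∧
    (∀ s ∈ towerPrimes q r, ∀ j t : ℕ, t.Prime → t ∣ orderOf (q : ZMod (s ^ j)) →
      t = r ∨ t = s) ∧
    (∀ s ∈ towerPrimes q r, ∀ j : ℕ, q.Coprime (orderOf (q : ZMod (s ^ j)))) ∧
    ∀ p : ℕ, IsSmallFor q p (towerPrimes q r) := by
  have hq : 1 < q := one_lt_of_not_dvd_sub_one hr1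
  have order_coprime : ∀ s ∈ towerPrimes q r, ∀ j : ℕ, q.Coprime (orderOf (q : ZMod (s ^ j))) :=
    fun _ hs j => towerPrimes.coprime_orderOf hq.pos hr hrq hs j
  exact ⟨exists_prime_dvd_pow_prime_pow_succ_sub_one hr hr1, towerPrimes.infinite hr hr1,
    fun _ hs _ _ => towerPrimes.eq_or_eq_of_prime_dvd_orderOf hq.pos hr hs, order_coprime,
    isSmallFor_of_forall_coprime_orderOf hq.ne' order_coprime⟩

/-- **Remark 3.4.2.** Let `p`, `r` be primes with `r ≠ p` and `r ∤ p - 1`, and let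
`S := {ℓ prime : ℓ ∣ p ^ (r ^ m) - 1 for some m ≥ 0}`. Then (a) for every `m` there is a
prime dividing `p ^ (r ^ (m+1)) - 1` but not `p ^ (r ^ m) - 1`, so `S` is infinite; and
(b) every prime divisor of the multiplicative order of `p` modulo `s ^ j` (for `s ∈ S`,
`j ≥ 1`) lies in `{r, s}`; consequently `S` is `𝔽_p`-small, with witnesses `ℓ₀ = p`,
`N₀ = 1`, although `S` is infinite. -/
theorem infinite_small_set
    (p r : ℕ) (hp : p.Prime) (hr : r.Prime) (hrp : r ≠ p) (hr1 : ¬ r ∣ (p - 1)) :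
    (∀ m : ℕ, ∃ ℓ : ℕ, ℓ.Prime ∧ ℓ ∣ p ^ r ^ (m + 1) - 1 ∧ ¬ ℓ ∣ p ^ r ^ m - 1) ∧
    {ℓ : ℕ | ℓ.Prime ∧ ∃ m : ℕ, ℓ ∣ p ^ r ^ m - 1}.Infinite ∧
    (∀ s ∈ {ℓ : ℕ | ℓ.Prime ∧ ∃ m : ℕ, ℓ ∣ p ^ r ^ m - 1}, ∀ j : ℕ, 1 ≤ j →
      ∀ t : ℕ, t.Prime → t ∣ orderOf ((p : ZMod (s ^ j))) → t = r ∨ t = s) ∧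
    (∀ ℓ ∈ {ℓ : ℕ | ℓ.Prime ∧ ∃ m : ℕ, ℓ ∣ p ^ r ^ m - 1}, ℓ ≠ p → ∀ j : ℕ, 1 ≤ j →
      ¬ p ^ 1 ∣ orderOf ((p : ZMod (ℓ ^ j)))) ∧
    IsSmallFor p p {ℓ : ℕ | ℓ.Prime ∧ ∃ m : ℕ, ℓ ∣ p ^ r ^ m - 1} := by
  obtain ⟨new_prime, inf, prime_factors, order_coprime, small⟩ := infinite_small_set_general p r hr
    ((Nat.prime_dvd_prime_iff_eq hr hp).not.mpr hrp) hr1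
  exact ⟨new_prime, inf, fun s hs j _ => prime_factors s hs j, fun ℓ hℓ _ j _ => by
    simpa using hp.coprime_iff_not_dvd.mp (order_coprime ℓ hℓ j), small p⟩
end

section
/- (Proposition 3.6) Let k be a finite field of characteristic p and let K be a function field of one variable over k. Let Σ be a set of prime numbers such that Σ ∪ {p} is not the set of all prime numbers. Let f, g ∈ K ∖ k. Then there exist infinitely many places O of K such that f ∈ O, g ∈ O, and there exist a, b ∈ κ(O)^× of Σ'-primary order with f(O) = a + b·g(O) in the residue field κ(O). -/
/-- A torsion element of a monoid whose (finite) order has all of its prime divisors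
outside `S`; for `S' = Primes ∖ S` this says the element has `S'`-primary order. -/
def PrimaryOutside (S : Set ℕ) {M : Type*} [Monoid M] (x : M) : Prop :=
  IsOfFinOrder x ∧ ∀ ℓ : ℕ, ℓ.Prime → ℓ ∣ orderOf x → ℓ ∉ S

/-- `K` is a function field of one variable over the field `k`: a finitely generated
extension of transcendence degree 1 (there is a transcendental `t` with `K` finite over
`k(t)`) in which `k` is algebraically closed. -/
def IsFunctionFieldOneVar (k K : Type*) [Field k] [Field K] [Algebra k K] : Prop :=
  (∃ t : K, Transcendental k t ∧
    FiniteDimensional (IntermediateField.adjoin k {t}) K) ∧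
  ∀ x : K, IsAlgebraic k x → x ∈ (algebraMap k K).range

/-!
Some `h` among `f - g`, `(f - 1) / g`, `g` is transcendental over `k` and satisfies
`f = a + b * g` with `a, b ∈ {1, h}`, so it suffices to find infinitely many places where `f` and
`g` are regular and `h` reduces to a root of unity of order a power of a prime `ℓ ∉ S ∪ {p}`.
Such a reduction occurs as soon as `Φ_{ℓ ^ n}(h)` lies in the maximal ideal of the place. By
Chevalley's extension theorem there is such a place containing the ring `k[h, f, g]` whenever
`Φ_{ℓ ^ n}(h)` is not a unit of that ring. This fails for only finitely many `n`: the image of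
`Spec k[h, f, g] → Spec k[h]` is open, so it misses only finitely many primes, and the
polynomials `Φ_{ℓ ^ n}` are pairwise coprime.
-/

open Polynomial

section Spectrum

variable {R : Type*} [CommRing R]

theorem finite_compl_of_isOpen_primeSpectrum [IsNoetherianRing R] [Ring.DimensionLEOne R]
    {U : Set (PrimeSpectrum R)} (hU : IsOpen U) (hne : U.Nonempty) :
    Uᶜ.Finite := by
  obtain ⟨I, hI⟩ := (PrimeSpectrum.isClosed_iff_zeroLocus_ideal Uᶜ).mp hU.isClosed_compl
  have hI_ne_bot : I ≠ ⊥ := by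
    rintro rfl
    have : Uᶜ = Set.univ := by rw [hI, Submodule.bot_coe, PrimeSpectrum.zeroLocus_singleton_zero]
    exact hne.ne_empty (Set.compl_univ_iff.mp this)
  refine (I.finite_minimalPrimes_of_isNoetherianRing R).of_injOn
    (f := PrimeSpectrum.asIdeal) (fun P hP ↦ ?_) (fun _ _ _ _ ↦ PrimeSpectrum.ext)
  have hIP : I ≤ P.asIdeal := by rwa [hI] at hP
  refine ⟨⟨P.isPrime, hIP⟩, fun Q ⟨hQ, hIQ⟩ hQP ↦ ?_⟩
  have hQ_max : Q.IsMaximal := hQ.isMaximal (ne_bot_of_le_ne_bot hI_ne_bot hIQ)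
  exact (hQ_max.eq_of_le P.isPrime.ne_top hQP).ge

variable [IsDedekindDomain R] {A : Type*} [CommRing A] [Nontrivial A] [Algebra R A]
  [Module.IsTorsionFree R A] [Algebra.FiniteType R A]

variable (R A) in
theorem finite_compl_range_comap_algebraMap :
    (Set.range (PrimeSpectrum.comap (algebraMap R A)))ᶜ.Finite := by
  have : Algebra.FinitePresentation R A := Algebra.FinitePresentation.of_finiteType.mp ‹_›
  -- Torsion-free modules over a Dedekind domain are flat, which provides going-down.
  have hopen : IsOpenMap (PrimeSpectrum.comap (algebraMap R A)) :=
    PrimeSpectrum.isOpenMap_comap_of_hasGoingDown_of_finitePresentation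
  exact finite_compl_of_isOpen_primeSpectrum hopen.isOpen_range (Set.range_nonempty _)

theorem finite_setOf_isUnit_algebraMap_of_pairwise_isCoprime {ι : Type*} {r : ι → R}
    (hcop : Pairwise (Function.onFun IsCoprime r)) (hr : ∀ i, ¬IsUnit (r i)) :
    {i | IsUnit (algebraMap R A (r i))}.Finite := by
  choose M hM hrM using fun i ↦ exists_max_ideal_of_mem_nonunits (hr i)
  refine (finite_compl_range_comap_algebraMap R A).of_injOn
    (f := fun i ↦ ⟨M i, (hM i).isPrime⟩) ?_ ?_
  · rintro i hi ⟨Q, hQ⟩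
    have hrQ : r i ∈ (PrimeSpectrum.comap (algebraMap R A) Q).asIdeal := hQ ▸ hrM i
    exact Q.isPrime.ne_top (Ideal.eq_top_of_isUnit_mem _ hrQ hi)
  · intro i _ j _ hij
    by_contra hne
    have hMij : M i = M j := congrArg PrimeSpectrum.asIdeal hij
    obtain ⟨a, b, hab⟩ := hcop hne
    refine (hM i).ne_top ((Ideal.eq_top_iff_one _).mpr (hab ▸ ?_))
    exact add_mem (Ideal.mul_mem_left _ a (hrM i)) (Ideal.mul_mem_left _ b (hMij ▸ hrM j))

end Spectrum

section ValuationSubring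

theorem exists_valuationSubring_mem_nonunits {K : Type*} [Field K] {A : Subring K} {x : A}
    (hx : ¬IsUnit x) : ∃ O : ValuationSubring K, A ≤ O.toSubring ∧ (x : K) ∈ O.nonunits := by
  obtain ⟨O, hAO, hnon⟩ := Ideal.image_subset_nonunits_valuationSubring (Ideal.span {x})
    (by rwa [Ne, Ideal.span_singleton_eq_top])
  exact ⟨O, hAO, hnon ⟨x, Ideal.mem_span_singleton_self x, rfl⟩⟩

variable {R K : Type*} [CommRing R] [Field K] [Algebra R K]

theorem not_isCoprime_of_algebraMap_mem_nonunits {O : ValuationSubring K}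
    (hO : ∀ c, algebraMap R K c ∈ O) {r s : R} (hr : algebraMap R K r ∈ O.nonunits)
    (hs : algebraMap R K s ∈ O.nonunits) : ¬IsCoprime r s := by
  let φ : R →+* O := (algebraMap R K).codRestrict O.toSubring hO
  rintro ⟨a, b, hab⟩
  have hφr : φ r ∈ IsLocalRing.maximalIdeal O := O.coe_mem_nonunits_iff.mp hr
  have hφs : φ s ∈ IsLocalRing.maximalIdeal O := O.coe_mem_nonunits_iff.mp hs
  refine (IsLocalRing.maximalIdeal O).one_notMem ?_
  rw [← map_one φ, ← hab, map_add, map_mul, map_mul]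
  exact add_mem (Ideal.mul_mem_left _ _ hφr) (Ideal.mul_mem_left _ _ hφs)

theorem infinite_setOf_valuationSubring_of_pairwise_isCoprime [IsDedekindDomain R]
    [Module.IsTorsionFree R K] {ι : Type*} [Infinite ι] {r : ι → R}
    (hcop : Pairwise (Function.onFun IsCoprime r)) (hr : ∀ i, ¬IsUnit (r i))
    {s : Set K} (hs : s.Finite) :
    {O : ValuationSubring K | (∀ c, algebraMap R K c ∈ O) ∧ s ⊆ O ∧
      ∃ i, algebraMap R K (r i) ∈ O.nonunits}.Infinite := by
  let A : Subalgebra R K := Algebra.adjoin R s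
  have : Algebra.FiniteType R A := .adjoin_of_finite hs
  have hinf : {i | IsUnit (algebraMap R A (r i))}ᶜ.Infinite :=
    (finite_setOf_isUnit_algebraMap_of_pairwise_isCoprime hcop hr).infinite_compl
  choose! O hAO hO using fun i (hi : ¬IsUnit (algebraMap R A (r i))) ↦
    exists_valuationSubring_mem_nonunits (A := A.toSubring) hi
  refine Set.infinite_of_injOn_mapsTo (f := O) (fun i hi j hj hij ↦ ?_) (fun i hi ↦ ?_) hinf
  · by_contra hne
    exact not_isCoprime_of_algebraMap_mem_nonunits (fun c ↦ hAO i hi (A.algebraMap_mem c))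
      (hO i hi) (hij ▸ hO j hj) (hcop hne)
  · exact ⟨fun c ↦ hAO i hi (A.algebraMap_mem c),
      fun x hx ↦ hAO i hi (Algebra.subset_adjoin hx), i, hO i hi⟩

end ValuationSubring

section Cyclotomic

theorem isCoprime_cyclotomic {k : Type*} [Field k] {m n : ℕ} (hm : (m : k) ≠ 0)
    (hn : (n : k) ≠ 0) (hmn : m ≠ n) : IsCoprime (cyclotomic m k) (cyclotomic n k) := by
  have hmn_ne : ((m * n : ℕ) : k) ≠ 0 := by rw [Nat.cast_mul]; exact mul_ne_zero hm hn
  have hpos : m * n ≠ 0 := fun h ↦ hmn_ne (by rw [h, Nat.cast_zero])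
  have hdvd : cyclotomic m k * cyclotomic n k ∣ X ^ (m * n) - 1 := by
    rw [← prod_cyclotomic_eq_X_pow_sub_one (Nat.pos_of_ne_zero hpos),
      ← Finset.prod_pair (f := fun d ↦ cyclotomic d k) hmn]
    refine Finset.prod_dvd_prod_of_subset _ _ _ fun d hd ↦ ?_
    rcases Finset.mem_insert.mp hd with rfl | hd
    · exact Nat.mem_divisors.mpr ⟨dvd_mul_right _ _, hpos⟩
    · rw [Finset.mem_singleton.mp hd]
      exact Nat.mem_divisors.mpr ⟨dvd_mul_left _ _, hpos⟩
  exact ((X_pow_sub_one_separable_iff.mpr hmn_ne).of_dvd hdvd).isCoprime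

theorem not_isUnit_cyclotomic (R : Type*) [CommRing R] [Nontrivial R] {m : ℕ} (hm : m ≠ 0) :
    ¬IsUnit (cyclotomic m R) := fun h ↦
  (degree_cyclotomic_pos m R (Nat.pos_of_ne_zero hm)).ne'
    (by rw [(cyclotomic.monic m R).eq_one_of_isUnit h, degree_one])

theorem isPrimitiveRoot_residue_of_eval_cyclotomic_mem {R : Type*} [CommRing R] [IsLocalRing R]
    {m : ℕ} [NeZero (m : IsLocalRing.ResidueField R)] {x : R}
    (hx : (cyclotomic m R).eval x ∈ IsLocalRing.maximalIdeal R) :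
    IsPrimitiveRoot (IsLocalRing.residue R x) m := by
  rw [← isRoot_cyclotomic_iff, IsRoot.def, ← map_cyclotomic m (IsLocalRing.residue R),
    eval_map_apply, IsLocalRing.residue_eq_zero_iff]
  exact hx

variable {k K : Type*} [Field k] [Field K] [Algebra k K]

theorem isPrimitiveRoot_residue_of_aeval_cyclotomic_mem_nonunits {O : ValuationSubring K}
    (hkO : ∀ c, algebraMap k K c ∈ O) {h : K} (hO : h ∈ O) {m : ℕ} (hm : (m : k) ≠ 0)
    (hroot : aeval h (cyclotomic m k) ∈ O.nonunits) :
    IsPrimitiveRoot (IsLocalRing.residue O ⟨h, hO⟩) m := by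
  let ι : k →+* IsLocalRing.ResidueField O :=
    (IsLocalRing.residue O).comp ((algebraMap k K).codRestrict O.toSubring hkO)
  have : NeZero (m : IsLocalRing.ResidueField O) :=
    ⟨by rw [← map_natCast ι]; exact (map_ne_zero ι).mpr hm⟩
  have heval : (((cyclotomic m O).eval ⟨h, hO⟩ : O) : K) = aeval h (cyclotomic m k) := by
    rw [aeval_def, eval₂_eq_eval_map, map_cyclotomic, ← map_cyclotomic m O.subtype]
    exact (eval_map_apply O.subtype ⟨h, hO⟩).symm
  exact isPrimitiveRoot_residue_of_eval_cyclotomic_mem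
    (O.coe_mem_nonunits_iff.mp (by rwa [heval]))

theorem infinite_setOf_isPrimitiveRoot_residue {h : K} (hh : Transcendental k h) {M : Set ℕ}
    (hM : M.Infinite) (hMk : ∀ m ∈ M, (m : k) ≠ 0) {s : Set K} (hs : s.Finite) :
    {O : ValuationSubring K | (∀ c : k, algebraMap k K c ∈ O) ∧ O ≠ ⊤ ∧ s ⊆ O ∧
      ∃ hO : h ∈ O, ∃ m ∈ M, IsPrimitiveRoot (IsLocalRing.residue O ⟨h, hO⟩) m}.Infinite := by
  let : Algebra k[X] K := (aeval h).toAlgebra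
  have hinj : Function.Injective (algebraMap k[X] K) := transcendental_iff_injective.mp hh
  have : Module.IsTorsionFree k[X] K := Module.isTorsionFree_iff_algebraMap_injective.mpr hinj
  have : Infinite M := hM.to_subtype
  have hcop : Pairwise (Function.onFun IsCoprime fun m : M ↦ cyclotomic m k) := fun m n hmn ↦
    isCoprime_cyclotomic (hMk m m.2) (hMk n n.2) (Subtype.coe_ne_coe.mpr hmn)
  have hunit (m : M) : ¬IsUnit (cyclotomic m k) :=
    not_isUnit_cyclotomic k fun hm ↦ hMk m m.2 (by rw [hm, Nat.cast_zero])
  refine (infinite_setOf_valuationSubring_of_pairwise_isCoprime hcop hunit hs).mono ?_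
  rintro O ⟨hO, hsO, m, hm⟩
  have hkO (c : k) : algebraMap k K c ∈ O := aeval_C h c ▸ hO (C c)
  have hhO : h ∈ O := aeval_X (R := k) h ▸ hO X
  refine ⟨hkO, ?_, hsO, hhO, m, m.2,
    isPrimitiveRoot_residue_of_aeval_cyclotomic_mem_nonunits hkO hhO (hMk m m.2) hm⟩
  rintro rfl
  rcases (ValuationSubring.mem_nonunits_iff_or _).mp hm with hzero | hinv
  · exact cyclotomic_ne_zero m k ((map_eq_zero_iff _ hinj).mp hzero)
  · exact hinv trivial

end Cyclotomic

namespace PrimaryOutside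

variable {S : Set ℕ}

theorem one {M : Type*} [Monoid M] : PrimaryOutside S (1 : M) :=
  ⟨IsOfFinOrder.one, fun _ hq hdvd ↦ absurd (orderOf_one (G := M) ▸ hdvd) hq.not_dvd_one⟩

theorem of_isPrimitiveRoot_prime_pow {M : Type*} [CommMonoid M] {ℓ n : ℕ} (hℓ : ℓ.Prime)
    (hℓS : ℓ ∉ S) {z : M} (hz : IsPrimitiveRoot z (ℓ ^ n)) : PrimaryOutside S z := by
  refine ⟨hz.isOfFinOrder (pow_ne_zero n hℓ.ne_zero), fun q hq hdvd ↦ ?_⟩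
  rw [← hz.eq_orderOf] at hdvd
  rwa [(Nat.prime_dvd_prime_iff_eq hq hℓ).mp (hq.dvd_of_dvd_pow hdvd)]

end PrimaryOutside

theorem exists_transcendental_eq_add_mul {k K : Type*} [Field k] [Field K] [Algebra k K]
    (f : K) {g : K} (hg : Transcendental k g) :
    ∃ h : K, Transcendental k h ∧
      ∃ a ∈ ({1, h} : Set K), ∃ b ∈ ({1, h} : Set K), f = a + b * g := by
  have hg0 : g ≠ 0 := by
    rintro rfl
    exact hg isAlgebraic_zero
  by_cases hsub : Transcendental k (f - g)
  · exact ⟨f - g, hsub, f - g, by simp, 1, by simp, by ring⟩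
  by_cases hdiv : Transcendental k ((f - 1) / g)
  · exact ⟨(f - 1) / g, hdiv, 1, by simp, (f - 1) / g, by simp, by field_simp; ring⟩
  have hsub_one : IsAlgebraic k (f - g - 1) := (not_not.mp hsub).sub isAlgebraic_one
  have hdiv_one : IsAlgebraic k ((f - g - 1) / g) := by
    rw [show (f - g - 1) / g = (f - 1) / g - 1 by field_simp; ring]
    exact (not_not.mp hdiv).sub isAlgebraic_one
  have hfg : f - g - 1 = 0 := by
    by_contra hne
    refine hg ?_
    rw [show g = (f - g - 1) * ((f - g - 1) / g)⁻¹ by field_simp]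
    exact hsub_one.mul hdiv_one.inv
  exact ⟨g, hg, 1, by simp, 1, by simp, by linear_combination hfg⟩

theorem prop_3_6_general {k K : Type*} [Field k] [Field K] [Algebra k K]
    {S : Set ℕ} {ℓ : ℕ} (hℓ : ℓ.Prime) (hℓS : ℓ ∉ S) (hℓk : (ℓ : k) ≠ 0)
    (f : K) {g : K} (hg : Transcendental k g) :
    {O : ValuationSubring K |
      (∀ c : k, algebraMap k K c ∈ O) ∧ O ≠ ⊤ ∧
      ∃ (hfO : f ∈ O) (hgO : g ∈ O),
        ∃ a b : IsLocalRing.ResidueField O,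
          a ≠ 0 ∧ b ≠ 0 ∧ PrimaryOutside S a ∧ PrimaryOutside S b ∧
          IsLocalRing.residue O ⟨f, hfO⟩ =
            a + b * IsLocalRing.residue O ⟨g, hgO⟩}.Infinite := by
  obtain ⟨h, hh, a, ha, b, hb, hf⟩ := exists_transcendental_eq_add_mul f hg
  have hM : (Set.range (ℓ ^ ·)).Infinite :=
    Set.infinite_range_of_injective (Nat.pow_right_injective hℓ.two_le)
  have hMk : ∀ m ∈ Set.range (ℓ ^ ·), (m : k) ≠ 0 := by
    rintro _ ⟨n, rfl⟩
    simpa only [Nat.cast_pow] using pow_ne_zero n hℓk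
  refine (infinite_setOf_isPrimitiveRoot_residue hh hM hMk (Set.toFinite {f, g})).mono ?_
  rintro O ⟨hkO, htop, hfgO, hhO, _, ⟨n, rfl⟩, hprim⟩
  have hfO : f ∈ O := hfgO (by simp)
  have hgO : g ∈ O := hfgO (by simp)
  have hres (x : K) (hx : x ∈ ({1, h} : Set K)) : ∃ hxO : x ∈ O,
      IsLocalRing.residue O ⟨x, hxO⟩ ≠ 0 ∧ PrimaryOutside S (IsLocalRing.residue O ⟨x, hxO⟩) := by
    rcases hx with rfl | rfl
    · exact ⟨one_mem O, one_ne_zero, .one⟩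
    · exact ⟨hhO, hprim.ne_zero (pow_ne_zero n hℓ.ne_zero),
        .of_isPrimitiveRoot_prime_pow hℓ hℓS hprim⟩
  obtain ⟨haO, ha0, haS⟩ := hres a ha
  obtain ⟨hbO, hb0, hbS⟩ := hres b hb
  refine ⟨hkO, htop, hfO, hgO, _, _, ha0, hb0, haS, hbS, ?_⟩
  rw [← map_mul, ← map_add]
  exact congrArg _ (Subtype.ext hf)

/-- **Proposition 3.6.** Let `K` be a function field of one variable over a finite field
`k` of characteristic `p`, and `S` a set of primes with `S ∪ {p}` not all of the primes.
For any `f, g ∈ K ∖ k` there are infinitely many places `O` of `K` (valuation subrings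
containing `k`, distinct from `K`) with `f, g ∈ O` such that `f(O) = a + b·g(O)` in the
residue field for some `a, b` in the residue field, nonzero of `S'`-primary order. -/
theorem prop_3_6
    (k K : Type) [Field k] [Finite k] [Field K] [Algebra k K]
    (p : ℕ) (hp : p.Prime) [CharP k p]
    (hK : IsFunctionFieldOneVar k K)
    (S : Set ℕ) (hS : ∃ ℓ : ℕ, ℓ.Prime ∧ ℓ ∉ S ∧ ℓ ≠ p)
    (f g : K) (hf : f ∉ (algebraMap k K).range) (hg : g ∉ (algebraMap k K).range) :
    {O : ValuationSubring K |
      (∀ c : k, algebraMap k K c ∈ O) ∧ O ≠ ⊤ ∧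
      ∃ (hfO : f ∈ O) (hgO : g ∈ O),
        ∃ a b : IsLocalRing.ResidueField ↥O,
          a ≠ 0 ∧ b ≠ 0 ∧ PrimaryOutside S a ∧ PrimaryOutside S b ∧
          IsLocalRing.residue ↥O ⟨f, hfO⟩ =
            a + b * IsLocalRing.residue ↥O ⟨g, hgO⟩}.Infinite := by
  obtain ⟨ℓ, hℓ, hℓS, hℓp⟩ := hS
  have hℓk : (ℓ : k) ≠ 0 := fun h ↦ hℓp
    ((Nat.prime_dvd_prime_iff_eq hp hℓ).mp ((CharP.cast_eq_zero_iff k p ℓ).mp h)).symm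
  exact prop_3_6_general hℓ hℓS hℓk f fun hg_alg ↦ hg (hK.2 g hg_alg)
end

section
/- (Core of Proposition 3.7 (i)) Let p be a prime number, k̄ an algebraic closure of 𝔽_p, and Σ a set of prime numbers. Let k' be an infinite subfield of k̄ such that the subgroup T := {x ∈ (k')^× : every prime dividing the multiplicative order of x lies in Σ} of (k')^× is finite, and set N' := #T. Then for all c, d ∈ (k')^×, there exist u, v ∈ (k')^× with c = u^{N'} + d·v^{N'}. In particular, there exist a, b ∈ (k')^× of Σ'-primary order with c = a + b·d. -/
/-!
In the affine plane over a field with `q` elements, about `#L / q` members of a set `L` of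
non-vertical lines pass through a typical point, and since two distinct lines share at most one
point, the second moment of the deviation is at most `q * #L`. Hence sets of points and lines with
`#P * #L > q ^ 3` always have an incidence. For a subgroup `G` of the multiplicative group with
`#G ^ 4 > q ^ 3`, apply this to the points `G × c G` and the lines `y = g + (d h) x` with
`g, h ∈ G`: dividing an incidence `c y = g + d h x` by `y ∈ G` writes `c` as an element of
`G + d G`. The `N`-th powers have index at most `N`, so they satisfy the size condition once
`q > 16 N ^ 4`, and `k'` contains such finite fields around any `c, d`. This incidence bound
replaces the Weil bound for the twisted Fermat curve.

If `ℓ ∈ S` and `ℓ ^ a` is the exact power of `ℓ` dividing the order of `u`, then `T` contains an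
element of order `ℓ ^ a`, so `ℓ ^ a ∣ #T` and the order of `u ^ #T` is prime to `ℓ`.
-/

open Finset

section Incidence

variable {F : Type*} [Field F] [Fintype F] [DecidableEq F]

/-- The points of the non-vertical line `y = l.1 + l.2 * x` in the affine plane `F × F`, the pair
`l` consisting of the intercept and the slope. -/
def line (l : F × F) : Finset (F × F) := {z | z.2 = l.1 + l.2 * z.1}

lemma mem_line {l z : F × F} : z ∈ line l ↔ z.2 = l.1 + l.2 * z.1 := by simp [line]

lemma card_line (l : F × F) : #(line l) = Fintype.card F := by
  have line_eq_image : line l = univ.image fun x ↦ (x, l.1 + l.2 * x) := by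
    ext ⟨x, y⟩
    simp [mem_line, eq_comm]
  rw [line_eq_image, card_image_of_injective _ fun x x' h ↦ congrArg Prod.fst h, card_univ]

lemma card_line_inter_line_le_one {l l' : F × F} (hne : l ≠ l') : #(line l ∩ line l') ≤ 1 := by
  rw [card_le_one]
  rintro ⟨x₁, y₁⟩ h₁ ⟨x₂, y₂⟩ h₂
  simp only [mem_inter, mem_line] at h₁ h₂
  have slope_ne : l.2 - l'.2 ≠ 0 := fun h ↦
    hne (Prod.ext (by linear_combination h₁.2 - h₁.1 - x₁ * h) (sub_eq_zero.1 h))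
  have hx : x₁ = x₂ := sub_eq_zero.1 <| (mul_eq_zero_iff_left slope_ne).1 <| by
    linear_combination h₁.2 - h₁.1 + h₂.1 - h₂.2
  rw [h₁.1, h₂.1, hx]

lemma card_line_inter_line_le (l l' : F × F) :
    #(line l ∩ line l') ≤ (if l = l' then Fintype.card F else 0) + 1 := by
  split_ifs with h
  · simp [h, card_line]
  · simpa using card_line_inter_line_le_one h

lemma sum_card_filter_mem_line (L : Finset (F × F)) :
    ∑ z, #{l ∈ L | z ∈ line l} = Fintype.card F * #L := by
  calc ∑ z, #{l ∈ L | z ∈ line l} = ∑ l ∈ L, #{z | z ∈ line l} :=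
        sum_card_bipartiteAbove_eq_sum_card_bipartiteBelow fun z l ↦ z ∈ line l
    _ = Fintype.card F * #L := by
        simp only [filter_univ_mem, card_line, sum_const, smul_eq_mul, mul_comm]

lemma sum_card_filter_mem_line_sq_le (L : Finset (F × F)) :
    ∑ z, #{l ∈ L | z ∈ line l} ^ 2 ≤ Fintype.card F * #L + #L ^ 2 := by
  calc ∑ z, #{l ∈ L | z ∈ line l} ^ 2
      = ∑ z, #{m ∈ L ×ˢ L | z ∈ line m.1 ∧ z ∈ line m.2} := by
        simp only [sq, ← card_product, ← filter_product]
    _ = ∑ m ∈ L ×ˢ L, #{z | z ∈ line m.1 ∧ z ∈ line m.2} :=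
        sum_card_bipartiteAbove_eq_sum_card_bipartiteBelow
          fun z (m : (F × F) × (F × F)) ↦ z ∈ line m.1 ∧ z ∈ line m.2
    _ = ∑ l ∈ L, ∑ l' ∈ L, #(line l ∩ line l') := by
        simp only [sum_product, filter_and, filter_univ_mem]
    _ ≤ ∑ l ∈ L, ∑ l' ∈ L, ((if l = l' then Fintype.card F else 0) + 1) := by
        gcongr
        exact card_line_inter_line_le _ _
    _ = Fintype.card F * #L + #L ^ 2 := by
        simp [sum_add_distrib, sq, mul_comm]

lemma sum_sq_card_mul_card_filter_mem_line_sub_le (L : Finset (F × F)) :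
    ∑ z, ((Fintype.card F : ℤ) * #{l ∈ L | z ∈ line l} - #L) ^ 2 ≤
      (Fintype.card F : ℤ) ^ 3 * #L := by
  set q : ℤ := (Fintype.card F : ℤ) with hq
  have first_moment : ∑ z, (#{l ∈ L | z ∈ line l} : ℤ) = q * #L := by
    rw [hq]
    exact_mod_cast sum_card_filter_mem_line L
  have second_moment : ∑ z, (#{l ∈ L | z ∈ line l} : ℤ) ^ 2 ≤ q * #L + (#L : ℤ) ^ 2 := by
    rw [hq]
    exact_mod_cast sum_card_filter_mem_line_sq_le L
  calc ∑ z, (q * #{l ∈ L | z ∈ line l} - #L) ^ 2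
      = q ^ 2 * ∑ z, (#{l ∈ L | z ∈ line l} : ℤ) ^ 2
          - 2 * q * #L * ∑ z, (#{l ∈ L | z ∈ line l} : ℤ) + q ^ 2 * (#L : ℤ) ^ 2 := by
        have card_plane : ((#(univ : Finset (F × F)) : ℕ) : ℤ) = q ^ 2 := by simp [hq, sq]
        simp only [sub_sq, sum_add_distrib, sum_sub_distrib, sum_const, nsmul_eq_mul, card_plane,
          mul_sum]
        congr! 3 <;> ring
    _ ≤ q ^ 2 * (q * #L + (#L : ℤ) ^ 2) - 2 * q * #L * (q * #L) + q ^ 2 * (#L : ℤ) ^ 2 := by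
        rw [first_moment]
        gcongr
    _ = q ^ 3 * #L := by ring

theorem exists_mem_line_of_card_pow_three_lt {P L : Finset (F × F)}
    (hPL : Fintype.card F ^ 3 < #P * #L) : ∃ z ∈ P, ∃ l ∈ L, z ∈ line l := by
  by_contra! hno
  have deviation_eq : ∀ z ∈ P, ((Fintype.card F : ℤ) * #{l ∈ L | z ∈ line l} - #L) ^ 2 =
      (#L : ℤ) ^ 2 := fun z hz ↦ by
    rw [filter_false_of_mem (hno z hz)]
    simp
  have hle : #L * (#P * #L) ≤ #L * Fintype.card F ^ 3 := by
    zify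
    calc (#L : ℤ) * (#P * #L)
        = ∑ z ∈ P, ((Fintype.card F : ℤ) * #{l ∈ L | z ∈ line l} - #L) ^ 2 := by
          rw [sum_congr rfl deviation_eq, sum_const, nsmul_eq_mul]
          ring
      _ ≤ ∑ z, ((Fintype.card F : ℤ) * #{l ∈ L | z ∈ line l} - #L) ^ 2 :=
          sum_le_univ_sum_of_nonneg fun _ ↦ sq_nonneg _
      _ ≤ #L * Fintype.card F ^ 3 := by
          rw [mul_comm]
          exact sum_sq_card_mul_card_filter_mem_line_sub_le L
  have card_pos : 0 < #L := Nat.pos_of_ne_zero fun h ↦ by simp [h] at hPL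
  exact hPL.not_ge (Nat.le_of_mul_le_mul_left hle card_pos)

end Incidence

section FiniteField

variable {F : Type*} [Field F] [Finite F]

lemma exists_eq_add_mul_of_card_pow_three_lt {G : Subgroup Fˣ}
    (hG : Nat.card F ^ 3 < Nat.card G ^ 4) (c d : Fˣ) :
    ∃ u ∈ G, ∃ v ∈ G, (c : F) = u + d * v := by
  classical
  have := Fintype.ofFinite F
  let translate (a : Fˣ) : Finset F := univ.image fun g : G ↦ (a : F) * (g : Fˣ)
  have card_translate (a : Fˣ) : #(translate a) = Nat.card G := by
    rw [card_image_of_injective, card_univ, Nat.card_eq_fintype_card]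
    exact fun g h hgh ↦ Subtype.ext (Units.ext (mul_left_cancel₀ a.ne_zero hgh))
  obtain ⟨⟨x, y⟩, hz, ⟨b, m⟩, hl, hinc⟩ := exists_mem_line_of_card_pow_three_lt
    (P := translate 1 ×ˢ translate c) (L := translate 1 ×ˢ translate d) (by
      simp only [card_product, card_translate, ← Nat.card_eq_fintype_card]
      exact hG.trans_eq (by ring))
  simp only [translate, mem_product, mem_image, mem_univ, true_and, Units.val_one, one_mul]
    at hz hl
  obtain ⟨⟨x, rfl⟩, y, rfl⟩ := hz
  obtain ⟨⟨g, rfl⟩, h, rfl⟩ := hl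
  have hcy : (c : F) * (y : Fˣ) = (g : Fˣ) + d * (h : Fˣ) * (x : Fˣ) := mem_line.1 hinc
  refine ⟨g / y, G.div_mem g.2 y.2, h * x / y,
    G.div_mem (G.mul_mem h.2 x.2) y.2, ?_⟩
  push_cast
  field_simp
  linear_combination hcy

lemma card_pow_three_lt_of_index_pow_four_lt {G : Subgroup Fˣ}
    (hG : 16 * G.index ^ 4 < Nat.card F) : Nat.card F ^ 3 < Nat.card G ^ 4 := by
  have card_mul_index : Nat.card G * G.index = Nat.card F - 1 := by
    rw [G.card_mul_index, Nat.card_units]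
  have index_pos : 0 < G.index ^ 4 := pow_pos (Nat.pos_of_ne_zero G.index_ne_zero_of_finite) 4
  have card_le : Nat.card F ≤ 2 * (Nat.card G * G.index) := by lia
  refine lt_of_mul_lt_mul_left (a := 16 * G.index ^ 4) ?_ (Nat.zero_le _)
  calc 16 * G.index ^ 4 * Nat.card F ^ 3
      < Nat.card F * Nat.card F ^ 3 := by gcongr; exact pow_pos Nat.card_pos 3
    _ = Nat.card F ^ 4 := by ring
    _ ≤ (2 * (Nat.card G * G.index)) ^ 4 := by gcongr
    _ = 16 * G.index ^ 4 * Nat.card G ^ 4 := by ring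

theorem exists_eq_pow_add_mul_pow_of_lt_card {N : ℕ} (hN : N ≠ 0) (hF : 16 * N ^ 4 < Nat.card F)
    (c d : Fˣ) : ∃ u v : Fˣ, (c : F) = u ^ N + d * v ^ N := by
  have index_le : (powMonoidHom N : Fˣ →* Fˣ).range.index ≤ N := by
    rw [IsCyclic.index_powMonoidHom_range]
    exact Nat.gcd_le_right _ (Nat.pos_of_ne_zero hN)
  have hindex : 16 * (powMonoidHom N : Fˣ →* Fˣ).range.index ^ 4 < Nat.card F :=
    lt_of_le_of_lt (by gcongr) hF
  obtain ⟨_, ⟨u, rfl⟩, _, ⟨v, rfl⟩, h⟩ := exists_eq_add_mul_of_card_pow_three_lt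
    (card_pow_three_lt_of_index_pow_four_lt hindex) c d
  exact ⟨u, v, by simpa using h⟩

end FiniteField

section AlgebraicOverFiniteField

variable (k : Type*) [Field k] [Finite k] {L : Type*} [Field L] [Algebra k L]
  [Algebra.IsAlgebraic k L]

include k

lemma finite_subfield_closure {s : Set L} (hs : s.Finite) : Finite (Subfield.closure s) := by
  have := hs.to_subtype
  have : FiniteDimensional k (IntermediateField.adjoin k s) :=
    IntermediateField.finiteDimensional_adjoin fun x _ ↦ Algebra.IsIntegral.isIntegral x
  have : Finite (IntermediateField.adjoin k s) := Module.finite_of_finite k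
  have closure_le : Subfield.closure s ≤ (IntermediateField.adjoin k s).toSubfield :=
    Subfield.closure_le.2 (IntermediateField.subset_adjoin _ _)
  exact Finite.of_injective _ (Subfield.inclusion closure_le).injective

lemma exists_finite_subfield_lt_card (K : Subfield L) [Infinite K] {s : Set L} (hs : s.Finite)
    (hsK : s ⊆ K) (n : ℕ) :
    ∃ E : Subfield L, Finite E ∧ E ≤ K ∧ s ⊆ E ∧ n < Nat.card E := by
  obtain ⟨t, htK, ht⟩ := (Set.infinite_coe_iff.1 ‹Infinite K›).exists_subset_card_eq (n + 1)
  have hE := finite_subfield_closure k (hs.union t.finite_toSet)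
  refine ⟨Subfield.closure (s ∪ t), hE, Subfield.closure_le.2 (Set.union_subset hsK htK),
    Set.subset_union_left.trans Subfield.subset_closure, ?_⟩
  calc n < Set.ncard (t : Set L) := by simp [ht]
    _ ≤ Nat.card (Subfield.closure (s ∪ t)) :=
      Set.ncard_le_ncard (Set.subset_union_right.trans Subfield.subset_closure) (Set.toFinite _)

theorem exists_eq_pow_add_mul_pow (K : Subfield L) [Infinite K] {N : ℕ} (hN : N ≠ 0)
    {c d : L} (hcK : c ∈ K) (hdK : d ∈ K) (hc : c ≠ 0) (hd : d ≠ 0) :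
    ∃ u v : L, u ∈ K ∧ v ∈ K ∧ u ≠ 0 ∧ v ≠ 0 ∧ c = u ^ N + d * v ^ N := by
  obtain ⟨E, _, hEK, hcdE, hcard⟩ := exists_finite_subfield_lt_card k K (s := {c, d})
    (by simp) (Set.pair_subset hcK hdK) (16 * N ^ 4)
  obtain ⟨hcE, hdE⟩ := Set.pair_subset_iff.1 hcdE
  obtain ⟨u, v, h⟩ := exists_eq_pow_add_mul_pow_of_lt_card hN hcard
    (.mk0 ⟨c, hcE⟩ (Subtype.coe_ne_coe.1 hc)) (.mk0 ⟨d, hdE⟩ (Subtype.coe_ne_coe.1 hd))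
  exact ⟨(u : E), (v : E), hEK (u : E).2, hEK (v : E).2, Subtype.coe_ne_coe.2 u.ne_zero,
    Subtype.coe_ne_coe.2 v.ne_zero, congr(($h : L))⟩

lemma isOfFinOrder_of_ne_zero {x : L} (hx : x ≠ 0) : IsOfFinOrder x := by
  have := finite_subfield_closure k (Set.finite_singleton x)
  let y : Subfield.closure {x} := ⟨x, Subfield.subset_closure rfl⟩
  have hy : IsUnit y := isUnit_iff_ne_zero.2 fun h ↦ hx congr(($h : L))
  exact (Subfield.closure {x}).subtype.toMonoidHom.isOfFinOrder (isOfFinOrder_iff_isUnit.2 hy)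

end AlgebraicOverFiniteField

section PrimaryPart

/-- The `S`-primary part of a commutative group, for a set `S` of primes: the elements whose order
has all of its prime divisors in `S`. An element of infinite order has `orderOf x = 0`, so it
belongs only when `S` contains every prime. -/
def primaryPart (S : Set ℕ) (G : Type*) [CommGroup G] : Subgroup G where
  carrier := {x | ∀ ℓ : ℕ, ℓ.Prime → ℓ ∣ orderOf x → ℓ ∈ S}
  one_mem' ℓ hℓ hdvd := absurd (Nat.dvd_one.1 (orderOf_one (G := G) ▸ hdvd)) hℓ.ne_one
  mul_mem' {x y} hx hy ℓ hℓ hdvd :=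
    have hdvd_mul : ℓ ∣ orderOf x * orderOf y :=
      hdvd.trans (Commute.all x y).orderOf_mul_dvd_mul_orderOf
    (hℓ.dvd_mul.1 hdvd_mul).elim (hx ℓ hℓ) (hy ℓ hℓ)
  inv_mem' {x} hx := by simpa using hx

lemma mem_primaryPart {S : Set ℕ} {G : Type*} [CommGroup G] {x : G} :
    x ∈ primaryPart S G ↔ ∀ ℓ : ℕ, ℓ.Prime → ℓ ∣ orderOf x → ℓ ∈ S := Iff.rfl

lemma ordProj_orderOf_dvd_card_primaryPart {S : Set ℕ} {G : Type*} [CommGroup G] {x : G}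
    (hx : IsOfFinOrder x) {ℓ : ℕ} (hℓ : ℓ.Prime) (hS : ℓ ∈ S) :
    ordProj[ℓ] (orderOf x) ∣ Nat.card (primaryPart S G) := by
  have order_pow : orderOf (x ^ ordCompl[ℓ] (orderOf x)) = ordProj[ℓ] (orderOf x) := by
    rw [orderOf_pow_of_dvd (Nat.ordCompl_pos ℓ hx.orderOf_pos.ne').ne' (Nat.ordCompl_dvd _ _),
      Nat.div_div_self (Nat.ordProj_dvd _ _) hx.orderOf_pos.ne']
  rw [← order_pow]
  refine Subgroup.orderOf_dvd_natCard _ (mem_primaryPart.2 fun r hr hdvd ↦ ?_)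
  rw [order_pow] at hdvd
  rwa [(Nat.prime_dvd_prime_iff_eq hr hℓ).1 (hr.dvd_of_dvd_pow hdvd)]

lemma primaryOutside_pow_card_primaryPart (S : Set ℕ) {G : Type*} [CommGroup G] {x : G}
    (hx : IsOfFinOrder x) : PrimaryOutside S (x ^ Nat.card (primaryPart S G)) := by
  refine ⟨hx.pow, fun ℓ hℓ hdvd hS ↦ Nat.not_dvd_ordCompl hℓ hx.orderOf_pos.ne' ?_⟩
  refine hdvd.trans (orderOf_dvd_of_pow_eq_one ?_)
  rw [← pow_mul, ← orderOf_dvd_iff_pow_eq_one]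
  calc orderOf x = ordProj[ℓ] (orderOf x) * ordCompl[ℓ] (orderOf x) :=
        (Nat.ordProj_mul_ordCompl_eq_self _ _).symm
    _ ∣ Nat.card (primaryPart S G) * ordCompl[ℓ] (orderOf x) :=
        Nat.mul_dvd_mul_right (ordProj_orderOf_dvd_card_primaryPart hx hℓ hS) _

lemma primaryOutside_map_iff {S : Set ℕ} {M M' : Type*} [Monoid M] [Monoid M'] (f : M →* M')
    (hf : Function.Injective f) {x : M} : PrimaryOutside S (f x) ↔ PrimaryOutside S x := by
  simp only [PrimaryOutside, orderOf_injective f hf, hf.isOfFinOrder_iff]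

variable {L : Type*} [Field L]

/-- The inclusion of the multiplicative group of a subfield into the ambient field. -/
def unitsSubtype (K : Subfield L) : Kˣ →* L := K.subtype.toMonoidHom.comp (Units.coeHom K)

lemma unitsSubtype_injective (K : Subfield L) : Function.Injective (unitsSubtype K) :=
  Subtype.val_injective.comp Units.val_injective

lemma image_unitsSubtype_primaryPart (S : Set ℕ) (K : Subfield L) :
    unitsSubtype K '' primaryPart S Kˣ =
      {x : L | x ∈ K ∧ x ≠ 0 ∧ ∀ ℓ : ℕ, ℓ.Prime → ℓ ∣ orderOf x → ℓ ∈ S} := by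
  ext x
  constructor
  · rintro ⟨u, hu, rfl⟩
    refine ⟨(u : K).2, Subtype.coe_ne_coe.2 u.ne_zero, ?_⟩
    rwa [orderOf_injective _ (unitsSubtype_injective K)]
  · rintro ⟨hxK, hx, hxS⟩
    refine ⟨.mk0 ⟨x, hxK⟩ (Subtype.coe_ne_coe.1 hx), mem_primaryPart.2 ?_, rfl⟩
    rwa [← orderOf_injective _ (unitsSubtype_injective K)]

lemma card_primaryPart_units_subfield (S : Set ℕ) (K : Subfield L) :
    Nat.card (primaryPart S Kˣ) =
      {x : L | x ∈ K ∧ x ≠ 0 ∧ ∀ ℓ : ℕ, ℓ.Prime → ℓ ∣ orderOf x → ℓ ∈ S}.ncard := by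
  rw [← image_unitsSubtype_primaryPart, Set.ncard_image_of_injective _ (unitsSubtype_injective K)]
  rfl

lemma primaryOutside_pow_card_primaryPart_units (S : Set ℕ) {K : Subfield L} {x : L}
    (hxK : x ∈ K) (hx : IsOfFinOrder x) :
    PrimaryOutside S (x ^ Nat.card (primaryPart S Kˣ)) := by
  let u : Kˣ := .mk0 ⟨x, hxK⟩ (Subtype.coe_ne_coe.1 hx.isUnit.ne_zero)
  have hu : IsOfFinOrder u := (unitsSubtype_injective K).isOfFinOrder_iff.1 hx
  have hmap : unitsSubtype K (u ^ Nat.card (primaryPart S Kˣ)) =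
      x ^ Nat.card (primaryPart S Kˣ) := map_pow ..
  rw [← hmap, primaryOutside_map_iff _ (unitsSubtype_injective K)]
  exact primaryOutside_pow_card_primaryPart S hu

end PrimaryPart

theorem prop_3_7_i_general
    (k : Type*) [Field k] [Finite k] {L : Type*} [Field L] [Algebra k L]
    [Algebra.IsAlgebraic k L] (K : Subfield L) [Infinite K] (S : Set ℕ)
    (hT : {x : L | x ∈ K ∧ x ≠ 0 ∧ ∀ ℓ : ℕ, ℓ.Prime → ℓ ∣ orderOf x → ℓ ∈ S}.Finite)
    (c d : L) (hcK : c ∈ K) (hdK : d ∈ K) (hc : c ≠ 0) (hd : d ≠ 0) :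
    (∃ u v : L, u ∈ K ∧ v ∈ K ∧ u ≠ 0 ∧ v ≠ 0 ∧
      c = u ^ hT.toFinset.card + d * v ^ hT.toFinset.card) ∧
    (∃ a b : L, a ∈ K ∧ b ∈ K ∧ a ≠ 0 ∧ b ≠ 0 ∧
      PrimaryOutside S a ∧ PrimaryOutside S b ∧ c = a + b * d) := by
  set N := hT.toFinset.card with hN
  have card_primaryPart : N = Nat.card (primaryPart S Kˣ) := by
    rw [hN, card_primaryPart_units_subfield, Set.ncard_eq_toFinset_card _ hT]
  have N_ne_zero : N ≠ 0 := card_ne_zero.2 ⟨1, hT.mem_toFinset.2 <|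
    (image_unitsSubtype_primaryPart S K).subset ⟨1, one_mem _, map_one _⟩⟩
  have primary_pow {x : L} (hxK : x ∈ K) (hx : x ≠ 0) : PrimaryOutside S (x ^ N) :=
    card_primaryPart ▸
      primaryOutside_pow_card_primaryPart_units S hxK (isOfFinOrder_of_ne_zero k hx)
  obtain ⟨u, v, huK, hvK, hu, hv, h⟩ := exists_eq_pow_add_mul_pow k K N_ne_zero hcK hdK hc hd
  exact ⟨⟨u, v, huK, hvK, hu, hv, h⟩, u ^ N, v ^ N, pow_mem huK N, pow_mem hvK N,
    pow_ne_zero N hu, pow_ne_zero N hv, primary_pow huK hu, primary_pow hvK hv, mul_comm d _ ▸ h⟩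

/-- **Core of Proposition 3.7 (i).** Let `k̄` be an algebraic closure of `𝔽_p`, `k'` an
infinite subfield of `k̄` such that the subgroup `T` of `(k')^×` of elements whose
multiplicative order has all prime divisors in `S` is finite, of cardinality `N'`. Then
every `c ∈ (k')^×` can be written `c = u^{N'} + d·v^{N'}` with `u, v ∈ (k')^×`, for any
`d ∈ (k')^×`; in particular `c = a + b·d` with `a, b ∈ (k')^×` of `S'`-primary order. -/
theorem prop_3_7_i
    (p : ℕ) [Fact p.Prime] (kbar : Type) [Field kbar]
    [Algebra (ZMod p) kbar] [IsAlgClosure (ZMod p) kbar]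
    (k' : Subfield kbar) (hk' : Infinite ↥k') (S : Set ℕ)
    (hT : {x : kbar | x ∈ k' ∧ x ≠ 0 ∧ ∀ ℓ : ℕ, ℓ.Prime → ℓ ∣ orderOf x → ℓ ∈ S}.Finite) :
    ∀ c d : kbar, c ∈ k' → d ∈ k' → c ≠ 0 → d ≠ 0 →
      (∃ u v : kbar, u ∈ k' ∧ v ∈ k' ∧ u ≠ 0 ∧ v ≠ 0 ∧
        c = u ^ hT.toFinset.card + d * v ^ hT.toFinset.card) ∧
      (∃ a b : kbar, a ∈ k' ∧ b ∈ k' ∧ a ≠ 0 ∧ b ≠ 0 ∧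
        PrimaryOutside S a ∧ PrimaryOutside S b ∧ c = a + b * d) := by
  have : Algebra.IsAlgebraic (ZMod p) kbar := IsAlgClosure.isAlgebraic
  exact prop_3_7_i_general (ZMod p) k' S hT
end

section
/- (Point-counting claim in the proof of Proposition 3.7 (ii)) Let F be a finite field with q elements and let N be a positive integer dividing q − 1. If q ≥ 4 and q > N⁴, then for all c, d ∈ F^× there exist u, v ∈ F^× with c = u^N + d·v^N. -/
/-!
Put `q = #F` and `n = gcd(N, q - 1)`. The characters of `Fˣ` that are trivial on `N`-th powers form
a group `X` of order `n`, and `∑ χ ∈ X, χ x` counts the `N`-th roots of `x` in `Fˣ`. Parametrising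
the solutions by the `x` with `u ^ N = c * x` and `d * v ^ N = c * (1 - x)` writes their number as
the sum of `χ c * φ (c / d) * J(χ, φ)` over `χ, φ ∈ X`. The pair `(1, 1)` contributes `q - 2`;
the `3 * (n - 1)` other pairs in which one of `χ`, `φ`, `χ * φ` is trivial contribute terms of
absolute value `1`, and the remaining `(n - 1) * (n - 2)` pairs terms of absolute value `√q`.
This is the Weil bound, `(n - 1) * (n - 2)` being twice the genus of the Fermat curve of degree `n`,
and it leaves at least one solution as soon as `q + 1 > 3 * n + (n - 1) * (n - 2) * √q`.
-/

open Finset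

section Annihilator

variable {M R : Type*} [CommMonoid M] [Finite M] [CommRing R] [IsDomain R]
  [HasEnoughRootsOfUnity R (Monoid.exponent Mˣ)]

/-- The group of multiplicative characters that are trivial on `H`, that is, the dual of
`Mˣ ⧸ H`, as a subgroup of the group of all multiplicative characters. -/
noncomputable abbrev mulCharAnnihilator (R : Type*) [CommRing R] [IsDomain R]
    [HasEnoughRootsOfUnity R (Monoid.exponent Mˣ)] (H : Subgroup Mˣ) : Subgroup (MulChar M R) :=
  (MulChar.subgroupOrderIsoSubgroupMulChar M R H).ofDual

lemma forall_mem_mulCharAnnihilator_apply_eq_one_iff {H : Subgroup Mˣ} {m : Mˣ} :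
    (∀ χ ∈ mulCharAnnihilator R H, χ m = 1) ↔ m ∈ H := by
  rw [← MulChar.mem_subgroupOrderIsoSubgroupMulChar_symm_iff, OrderDual.toDual_ofDual,
    OrderIso.symm_apply_apply]

lemma sum_mulCharAnnihilator_apply (H : Subgroup Mˣ) [DecidablePred (· ∈ H)]
    [Fintype (mulCharAnnihilator R H)] (m : Mˣ) :
    ∑ χ : mulCharAnnihilator R H, (χ : MulChar M R) m = if m ∈ H then (H.index : R) else 0 := by
  let evalAt : mulCharAnnihilator R H →* R :=
    { toFun χ := (χ : MulChar M R) m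
      map_one' := MulChar.one_apply_coe m
      map_mul' _ _ := MulChar.mul_apply _ _ _ }
  have evalAt_eq_one_iff : evalAt = 1 ↔ m ∈ H := by
    rw [← forall_mem_mulCharAnnihilator_apply_eq_one_iff (R := R), DFunLike.ext_iff, Subtype.forall]
    rfl
  classical
  calc ∑ χ : mulCharAnnihilator R H, (χ : MulChar M R) m
      = if evalAt = 1 then (Fintype.card (mulCharAnnihilator R H) : R) else 0 := by
        exact_mod_cast sum_hom_units evalAt
    _ = if m ∈ H then (H.index : R) else 0 := by
        simp only [evalAt_eq_one_iff, ← Nat.card_eq_fintype_card,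
          MulChar.card_subgroupOrderIsoSubgroupMulChar, Subgroup.index]

end Annihilator

lemma card_filter_pow_eq {G : Type*} [CommGroup G] [Fintype G] [DecidableEq G] (N : ℕ) (y : G)
    [DecidablePred (· ∈ (powMonoidHom N : G →* G).range)] :
    #{u : G | u ^ N = y} =
      if y ∈ (powMonoidHom N : G →* G).range then (powMonoidHom N : G →* G).range.index else 0 := by
  split_ifs with hy
  · have card_fiber_one : #{u : G | u ^ N = 1} = Nat.card (powMonoidHom N : G →* G).ker :=
      (Nat.subtype_card _ fun u ↦ by simp [MonoidHom.mem_ker]).symm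
    rw [Subgroup.index_range, ← card_fiber_one]
    exact MonoidHom.card_fiber_eq_of_mem_range (powMonoidHom N) hy ⟨1, one_pow N⟩
  · rw [card_eq_zero, filter_eq_empty_iff]
    exact fun u _ hu ↦ hy ⟨u, hu⟩

section JacobiSum

lemma sum_mul_sum_eq_sum_jacobiSum {A R ι κ : Type*} [CommRing A] [Fintype A] [CommRing R]
    [Fintype ι] [Fintype κ] (χ : ι → MulChar A R) (φ : κ → MulChar A R) (a b : A) :
    ∑ x : A, (∑ i, χ i (a * x)) * ∑ j, φ j (b * (1 - x)) =
      ∑ p : ι × κ, χ p.1 a * φ p.2 b * jacobiSum (χ p.1) (φ p.2) := by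
  calc ∑ x : A, (∑ i, χ i (a * x)) * ∑ j, φ j (b * (1 - x))
      = ∑ x : A, ∑ p : ι × κ, χ p.1 (a * x) * φ p.2 (b * (1 - x)) := by
        simp_rw [sum_mul_sum, Fintype.sum_prod_type]
    _ = ∑ p : ι × κ, ∑ x : A, χ p.1 (a * x) * φ p.2 (b * (1 - x)) := sum_comm
    _ = ∑ p : ι × κ, χ p.1 a * φ p.2 b * jacobiSum (χ p.1) (φ p.2) := by
        simp_rw [jacobiSum, mul_sum, map_mul, mul_mul_mul_comm]

lemma norm_mulChar_apply {A : Type*} [CommRing A] [Finite A] (χ : MulChar A ℂ) {a : A}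
    (ha : IsUnit a) : ‖χ a‖ = 1 := by
  have : Fintype Aˣ := Fintype.ofFinite Aˣ
  exact Complex.norm_eq_one_of_mem_rootsOfUnity (χ.apply_mem_rootsOfUnity ha.unit)

variable {F : Type*} [Field F] [Fintype F]

lemma norm_jacobiSum_one_left {φ : MulChar F ℂ} (hφ : φ ≠ 1) : ‖jacobiSum 1 φ‖ = 1 := by
  rw [jacobiSum_one_nontrivial hφ, norm_neg, norm_one]

lemma norm_jacobiSum_one_right {χ : MulChar F ℂ} (hχ : χ ≠ 1) : ‖jacobiSum χ 1‖ = 1 := by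
  rw [jacobiSum_comm, norm_jacobiSum_one_left hχ]

lemma norm_jacobiSum_inv {χ : MulChar F ℂ} (hχ : χ ≠ 1) : ‖jacobiSum χ χ⁻¹‖ = 1 := by
  rw [jacobiSum_nontrivial_inv hχ, norm_neg, norm_mulChar_apply χ isUnit_one.neg]

lemma norm_jacobiSum_eq_sqrt {χ φ : MulChar F ℂ} (hχ : χ ≠ 1) (hφ : φ ≠ 1) (hχφ : χ * φ ≠ 1) :
    ‖jacobiSum χ φ‖ = √(Fintype.card F) := by
  have ringChar_ne : ringChar ℂ ≠ ringChar F := by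
    rw [ringChar.eq_zero]
    exact (CharP.ringChar_ne_zero_of_finite F).symm
  have star_jacobiSum : star (jacobiSum χ φ) = jacobiSum χ⁻¹ φ⁻¹ := by
    simp only [jacobiSum, star_sum, star_mul', MulChar.star_apply']
  have norm_mul_self : ‖jacobiSum χ φ‖ * ‖jacobiSum χ φ‖ = Fintype.card F := by
    calc ‖jacobiSum χ φ‖ * ‖jacobiSum χ φ‖
        = ‖jacobiSum χ φ * jacobiSum χ⁻¹ φ⁻¹‖ := by rw [norm_mul, ← star_jacobiSum, norm_star]
      _ = Fintype.card F := by
          rw [jacobiSum_mul_jacobiSum_inv ringChar_ne hχ hφ hχφ, Complex.norm_natCast]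
  rw [← norm_mul_self, Real.sqrt_mul_self (norm_nonneg _)]

variable (X : Subgroup (MulChar F ℂ)) [Fintype X]

lemma sum_norm_jacobiSum_one_left :
    ∑ φ : X, ‖jacobiSum 1 (φ : MulChar F ℂ)‖ =
      ‖jacobiSum (1 : MulChar F ℂ) 1‖ + (Fintype.card X - 1) := by
  classical
  have norm_eq_one : ∀ φ ∈ univ.erase (1 : X), ‖jacobiSum 1 (φ : MulChar F ℂ)‖ = 1 :=
    fun φ hφ ↦ norm_jacobiSum_one_left (by simpa using hφ)
  rw [← add_sum_erase _ _ (mem_univ (1 : X)), sum_congr rfl norm_eq_one, sum_const, nsmul_one,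
    cast_card_erase_of_mem (mem_univ _), card_univ, OneMemClass.coe_one]

lemma sum_norm_jacobiSum_of_ne_one {χ : X} (hχ : χ ≠ 1) :
    ∑ φ : X, ‖jacobiSum (χ : MulChar F ℂ) φ‖ = 2 + (Fintype.card X - 2) * √(Fintype.card F) := by
  classical
  have one_ne_inv : (1 : X) ≠ χ⁻¹ := (inv_ne_one.mpr hχ).symm
  have hχ' : (χ : MulChar F ℂ) ≠ 1 := by simpa using hχ
  have norm_eq_sqrt : ∀ φ ∈ ({1, χ⁻¹}ᶜ : Finset X),
      ‖jacobiSum (χ : MulChar F ℂ) φ‖ = √(Fintype.card F) := by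
    simp only [mem_compl, mem_insert, mem_singleton, not_or, and_imp]
    refine fun φ hφ hφ' ↦ norm_jacobiSum_eq_sqrt hχ' (by simpa using hφ) ?_
    exact_mod_cast mt eq_inv_of_mul_eq_one_right hφ'
  rw [← sum_add_sum_compl {1, χ⁻¹}, sum_pair one_ne_inv, sum_congr rfl norm_eq_sqrt, sum_const,
    card_compl, card_pair one_ne_inv, nsmul_eq_mul,
    Nat.cast_sub (card_pair one_ne_inv ▸ card_le_univ _)]
  push_cast
  rw [norm_jacobiSum_one_right hχ', norm_jacobiSum_inv hχ']
  ring

lemma sum_erase_one_norm_jacobiSum [DecidableEq X] :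
    ∑ p ∈ univ.erase (1 : X × X), ‖jacobiSum (p.1 : MulChar F ℂ) p.2‖ =
      3 * (Fintype.card X - 1) +
        (Fintype.card X - 1) * (Fintype.card X - 2) * √(Fintype.card F) := by
  have sum_of_ne_one : ∑ χ ∈ univ.erase (1 : X), ∑ φ : X, ‖jacobiSum (χ : MulChar F ℂ) φ‖ =
      (Fintype.card X - 1) * (2 + (Fintype.card X - 2) * √(Fintype.card F)) := by
    rw [sum_congr rfl fun χ hχ ↦ sum_norm_jacobiSum_of_ne_one X (ne_of_mem_erase hχ), sum_const,
      nsmul_eq_mul, cast_card_erase_of_mem (mem_univ _), card_univ]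
  rw [sum_erase_eq_sub (mem_univ _), Fintype.sum_prod_type, ← add_sum_erase _ _ (mem_univ (1 : X)),
    sum_of_ne_one]
  simp only [Prod.fst_one, Prod.snd_one, OneMemClass.coe_one, sum_norm_jacobiSum_one_left]
  ring

lemma norm_sum_jacobiSum_sub_le {a b : F} (ha : a ≠ 0) (hb : b ≠ 0) :
    ‖∑ p : X × X, (p.1 : MulChar F ℂ) a * (p.2 : MulChar F ℂ) b *
        jacobiSum (p.1 : MulChar F ℂ) p.2 - (Fintype.card F - 2)‖ ≤
      3 * (Fintype.card X - 1) +
        (Fintype.card X - 1) * (Fintype.card X - 2) * √(Fintype.card F) := by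
  classical
  rw [← add_sum_erase _ _ (mem_univ (1 : X × X)), ← sum_erase_one_norm_jacobiSum]
  simp only [Prod.fst_one, Prod.snd_one, OneMemClass.coe_one, MulChar.one_apply ha.isUnit,
    MulChar.one_apply hb.isUnit, one_mul, jacobiSum_one_one, add_sub_cancel_left]
  refine norm_sum_le_of_le _ fun p _ ↦ ?_
  rw [norm_mul, norm_mul, norm_mulChar_apply _ ha.isUnit, norm_mulChar_apply _ hb.isUnit, one_mul,
    one_mul]

end JacobiSum

section FermatCurve

variable {F : Type*} [Field F] [Fintype F]

lemma card_mulCharAnnihilator_range_pow (N : ℕ)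
    [Fintype (mulCharAnnihilator ℂ (powMonoidHom N : Fˣ →* Fˣ).range)] :
    Fintype.card (mulCharAnnihilator ℂ (powMonoidHom N : Fˣ →* Fˣ).range) =
      N.gcd (Fintype.card F - 1) := by
  rw [← Nat.card_eq_fintype_card, MulChar.card_subgroupOrderIsoSubgroupMulChar,
    ← Subgroup.index, IsCyclic.index_powMonoidHom_range, Nat.card_units, Nat.card_eq_fintype_card,
    Nat.gcd_comm]

variable [DecidableEq F]

/-- The `F`-points of the curve `c = u ^ N + d * v ^ N` in `𝔾_m × 𝔾_m`, encoded as pairs of units.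
For nonzero `c` and `d` it is a twist of the Fermat curve of degree `N` with its cusps removed. -/
def twistedFermatPoints (N : ℕ) (c d : F) : Finset (Fˣ × Fˣ) :=
  {p | c = (p.1 : F) ^ N + d * (p.2 : F) ^ N}

lemma sum_mulCharAnnihilator_range_pow_apply (N : ℕ)
    [Fintype (mulCharAnnihilator ℂ (powMonoidHom N : Fˣ →* Fˣ).range)] (x : F) :
    ∑ χ : mulCharAnnihilator ℂ (powMonoidHom N : Fˣ →* Fˣ).range, (χ : MulChar F ℂ) x =
      #{u : Fˣ | (u : F) ^ N = x} := by
  classical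
  rcases eq_or_ne x 0 with rfl | hx
  · have no_roots : ({u : Fˣ | (u : F) ^ N = 0} : Finset Fˣ) = ∅ :=
      filter_eq_empty_iff.mpr fun u _ ↦ pow_ne_zero N u.ne_zero
    simp only [MulChar.map_zero, sum_const_zero, no_roots, card_empty, Nat.cast_zero]
  · lift x to Fˣ using hx.isUnit
    simp_rw [sum_mulCharAnnihilator_apply, ← Units.val_pow_eq_pow_val, Units.val_inj,
      card_filter_pow_eq]
    push_cast
    rfl

lemma card_twistedFermatPoints (N : ℕ) {c d : F} (hc : c ≠ 0) (hd : d ≠ 0) :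
    #(twistedFermatPoints N c d) =
      ∑ x : F, #{u : Fˣ | (u : F) ^ N = c * x} * #{v : Fˣ | (v : F) ^ N = c / d * (1 - x)} := by
  rw [card_eq_sum_card_fiberwise (f := fun p ↦ (p.1 : F) ^ N / c) (t := univ) (by simp)]
  refine sum_congr rfl fun x _ ↦ ?_
  rw [← card_product]
  congr 1
  ext ⟨u, v⟩
  simp only [twistedFermatPoints, mem_filter, mem_univ, true_and, mem_product, div_eq_iff hc,
    mul_comm x c, and_comm (a := c = _)]
  refine and_congr_right fun hu ↦ ?_
  rw [hu, div_mul_eq_mul_div, eq_div_iff hd]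
  constructor <;> intro h <;> linear_combination -h

theorem abs_card_twistedFermatPoints_sub_le {N n : ℕ} (hn : N.gcd (Fintype.card F - 1) = n)
    {c d : F} (hc : c ≠ 0) (hd : d ≠ 0) :
    |(#(twistedFermatPoints N c d) : ℝ) - (Fintype.card F - 2)| ≤
      3 * (n - 1) + (n - 1) * (n - 2) * √(Fintype.card F) := by
  let X := mulCharAnnihilator ℂ (powMonoidHom N : Fˣ →* Fˣ).range
  let _ : Fintype X := Fintype.ofFinite X
  have card_eq_sum_jacobiSum : (#(twistedFermatPoints N c d) : ℂ) =
      ∑ p : X × X, (p.1 : MulChar F ℂ) c * (p.2 : MulChar F ℂ) (c / d) *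
        jacobiSum (p.1 : MulChar F ℂ) p.2 := by
    rw [← sum_mul_sum_eq_sum_jacobiSum (fun χ : X ↦ χ.1) fun φ : X ↦ φ.1,
      card_twistedFermatPoints N hc hd]
    simp only [X, sum_mulCharAnnihilator_range_pow_apply, Nat.cast_sum, Nat.cast_mul]
  have norm_sub_le := norm_sum_jacobiSum_sub_le X hc (div_ne_zero hc hd)
  rw [← card_eq_sum_jacobiSum, card_mulCharAnnihilator_range_pow, hn] at norm_sub_le
  rw [← Real.norm_eq_abs, ← Complex.norm_real]
  push_cast
  exact norm_sub_le

end FermatCurve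

lemma three_mul_add_mul_sqrt_lt_add_one {n q : ℝ} (hn : 1 ≤ n) (h4 : 4 ≤ q) (hnq : n ^ 4 < q) :
    3 * n + (n - 1) * (n - 2) * √q < q + 1 := by
  have two_le_sqrt : 2 ≤ √q := Real.le_sqrt_of_sq_le (by linarith)
  have sq_lt_sqrt : n ^ 2 < √q := Real.lt_sqrt_of_sq_lt (by linarith [pow_mul n 2 2])
  have sqrt_mul_self : √q * √q = q := Real.mul_self_sqrt (by linarith)
  -- The difference of the two sides is `√q * (√q - n²) + (3n - 2) * (√q - 2) + 3 * (n - 1)`.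
  have sqrt_mul_pos : 0 < √q * (√q - n ^ 2) := mul_pos (by linarith) (by linarith)
  have sqrt_sub_two_mul_nonneg : 0 ≤ (3 * n - 2) * (√q - 2) :=
    mul_nonneg (by linarith) (by linarith)
  linarith

theorem fermat_curve_points_general {F : Type*} [Field F] [Fintype F] {N n : ℕ}
    (hn : N.gcd (Fintype.card F - 1) = n)
    (weil_lt : 3 * (n : ℝ) + (n - 1) * (n - 2) * √(Fintype.card F) < Fintype.card F + 1)
    {c d : F} (hc : c ≠ 0) (hd : d ≠ 0) :
    ∃ u v : F, u ≠ 0 ∧ v ≠ 0 ∧ c = u ^ N + d * v ^ N := by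
  classical
  have points_pos : (0 : ℝ) < #(twistedFermatPoints N c d) := by
    linarith [(abs_le.mp (abs_card_twistedFermatPoints_sub_le hn hc hd)).1]
  obtain ⟨⟨u, v⟩, huv⟩ := card_pos.mp (Nat.cast_pos.mp points_pos)
  exact ⟨u, v, u.ne_zero, v.ne_zero, (mem_filter.mp huv).2⟩

/-- **Point-counting claim in the proof of Proposition 3.7 (ii).** Let `F` be a finite
field with `q` elements and `N` a positive divisor of `q - 1`. If `q ≥ 4` and `q > N⁴`,
then every `c ∈ F^×` can be written as `c = u^N + d·v^N` with `u, v ∈ F^×`, for any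
`d ∈ F^×`. -/
theorem fermat_curve_points
    (F : Type) [Field F] [Fintype F] (N : ℕ) (hN : 0 < N)
    (hdvd : N ∣ Fintype.card F - 1) (h4 : 4 ≤ Fintype.card F)
    (hq : N ^ 4 < Fintype.card F) :
    ∀ c d : F, c ≠ 0 → d ≠ 0 →
      ∃ u v : F, u ≠ 0 ∧ v ≠ 0 ∧ c = u ^ N + d * v ^ N := by
  exact fun c d ↦ fermat_curve_points_general (Nat.gcd_eq_left hdvd)
    (three_mul_add_mul_sqrt_lt_add_one (mod_cast hN) (mod_cast h4) (mod_cast hq))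
end

section
/- (Lemma 3.8) Let p be a prime number and Σ a finite set of prime numbers. For a positive integer n, let n_Σ denote the greatest divisor of n all of whose prime divisors belong to Σ. Then there exists a constant C > 0, depending only on p and Σ, such that for every integer m ≥ 1 one has (p^m − 1)_Σ ≤ C·m. -/
/-!
Fix a prime `ℓ` and coprime `b < a`. If `ℓ` divides `a ^ m - b ^ m` at all, then `ℓ` divides neither
`a` nor `b`, so by Fermat `ℓ ∣ a ^ k - b ^ k` for `k = ℓ * (ℓ - 1)`. The factor `ℓ` in `k` makes `k`
even when `ℓ = 2`, so that lifting the exponent holds for every prime in the single form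
`v_ℓ(a ^ (k * m) - b ^ (k * m)) = v_ℓ(a ^ k - b ^ k) + v_ℓ(m)`. As `a ^ m - b ^ m` divides
`a ^ (k * m) - b ^ (k * m)`, its `ℓ`-adic valuation exceeds that of `m` by at most a constant;
multiplying over `ℓ ∈ S` bounds the `S`-part of `a ^ m - b ^ m` by a constant times that of `m`.
-/

section Valuation

variable {ℓ a b m : ℕ}

theorem prime_dvd_pow_sub_pow_of_not_dvd (hℓ : ℓ.Prime) (ha : ¬ ℓ ∣ a) (hb : ¬ ℓ ∣ b) :
    ℓ ∣ a ^ (ℓ - 1) - b ^ (ℓ - 1) := by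
  have fermat {x : ℕ} (hx : ¬ ℓ ∣ x) : x ^ (ℓ - 1) ≡ 1 [MOD ℓ] :=
    Nat.ModEq.pow_card_sub_one_eq_one hℓ ((hℓ.coprime_iff_not_dvd.2 hx).symm)
  exact Nat.dvd_of_mod_eq_zero
    (Nat.sub_mod_eq_zero_of_mod_eq ((fermat ha).trans (fermat hb).symm))

theorem not_dvd_and_not_dvd_of_dvd_pow_sub_pow (hℓ : ℓ.Prime) (hab : a.Coprime b) (hle : b ≤ a)
    (hm : m ≠ 0) (hdvd : ℓ ∣ a ^ m - b ^ m) : ¬ ℓ ∣ a ∧ ¬ ℓ ∣ b := by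
  have dvd_iff : ℓ ∣ b ↔ ℓ ∣ a := by
    rw [← hℓ.prime.dvd_pow_iff_dvd (a := b) hm, ← hℓ.prime.dvd_pow_iff_dvd (a := a) hm]
    exact ((Nat.modEq_iff_dvd' (Nat.pow_le_pow_left hle m)).2 hdvd).dvd_iff dvd_rfl
  have not_both : ¬ (ℓ ∣ a ∧ ℓ ∣ b) := fun h => Nat.not_coprime_of_dvd_of_dvd hℓ.one_lt h.1 h.2 hab
  tauto

theorem factorization_two_pow_two_mul_sub_pow_two_mul (ha : ¬ 2 ∣ a) (hb : ¬ 2 ∣ b) (hlt : b < a)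
    (hm : m ≠ 0) :
    (a ^ (2 * m) - b ^ (2 * m)).factorization 2 =
      (a ^ 2 - b ^ 2).factorization 2 + m.factorization 2 := by
  have hdvd : 2 ∣ a - b := by lia
  have lift_two_mul := padicValNat.pow_two_sub_pow hlt hdvd ha (n := 2 * m) (by lia)
    (even_two_mul m)
  have lift_two := padicValNat.pow_two_sub_pow hlt hdvd ha two_ne_zero even_two
  rw [padicValNat.mul two_ne_zero hm] at lift_two_mul
  simp only [Nat.factorization_def _ Nat.prime_two]
  lia

theorem factorization_pow_mul_sub_pow_mul (hℓ : ℓ.Prime) (ha : ¬ ℓ ∣ a) (hb : ¬ ℓ ∣ b)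
    (hlt : b < a) (hm : m ≠ 0) :
    (a ^ (ℓ * (ℓ - 1) * m) - b ^ (ℓ * (ℓ - 1) * m)).factorization ℓ =
      (a ^ (ℓ * (ℓ - 1)) - b ^ (ℓ * (ℓ - 1))).factorization ℓ + m.factorization ℓ := by
  rcases hℓ.eq_two_or_odd' with rfl | hodd
  · exact factorization_two_pow_two_mul_sub_pow_two_mul ha hb hlt hm
  · have : Fact ℓ.Prime := ⟨hℓ⟩
    have hk : ℓ * (ℓ - 1) ≠ 0 := mul_ne_zero hℓ.ne_zero (Nat.sub_ne_zero_of_lt hℓ.one_lt)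
    have hdvd : ℓ ∣ a ^ (ℓ * (ℓ - 1)) - b ^ (ℓ * (ℓ - 1)) :=
      (prime_dvd_pow_sub_pow_of_not_dvd hℓ ha hb).trans
        (Nat.pow_sub_pow_dvd_pow_sub_pow a b (Dvd.intro_left ℓ rfl))
    simp only [Nat.factorization_def _ hℓ, pow_mul _ (ℓ * (ℓ - 1)) m]
    exact padicValNat.pow_sub_pow hodd (Nat.pow_lt_pow_left hlt hk) hdvd
      (fun h => ha (hℓ.dvd_of_dvd_pow h)) hm

theorem factorization_pow_sub_pow_le (hℓ : ℓ.Prime) (hab : a.Coprime b) (hlt : b < a)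
    (hm : m ≠ 0) :
    (a ^ m - b ^ m).factorization ℓ ≤
      (a ^ (ℓ * (ℓ - 1)) - b ^ (ℓ * (ℓ - 1))).factorization ℓ + m.factorization ℓ := by
  by_cases hdvd : ℓ ∣ a ^ m - b ^ m
  · obtain ⟨ha, hb⟩ := not_dvd_and_not_dvd_of_dvd_pow_sub_pow hℓ hab hlt.le hm hdvd
    have hkm : ℓ * (ℓ - 1) * m ≠ 0 :=
      mul_ne_zero (mul_ne_zero hℓ.ne_zero (Nat.sub_ne_zero_of_lt hℓ.one_lt)) hm
    have sub_ne_zero {n : ℕ} (hn : n ≠ 0) : a ^ n - b ^ n ≠ 0 :=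
      Nat.sub_ne_zero_of_lt (Nat.pow_lt_pow_left hlt hn)
    rw [← factorization_pow_mul_sub_pow_mul hℓ ha hb hlt hm]
    exact (Nat.factorization_le_iff_dvd (sub_ne_zero hm) (sub_ne_zero hkm)).2
      (Nat.pow_sub_pow_dvd_pow_sub_pow a b (Dvd.intro_left _ rfl)) ℓ
  · rw [Nat.factorization_eq_zero_of_not_dvd hdvd]
    exact Nat.zero_le _

end Valuation

theorem prod_pow_factorization_dvd {S : Finset ℕ} (hS : ∀ ℓ ∈ S, Nat.Prime ℓ) (n : ℕ) :
    ∏ ℓ ∈ S, ℓ ^ n.factorization ℓ ∣ n :=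
  Finset.prod_dvd_of_isRelPrime
    (fun ℓ hℓ q hq hne => Nat.coprime_iff_isRelPrime.1
      (Nat.Coprime.pow _ _ ((Nat.coprime_primes (hS ℓ hℓ) (hS q hq)).2 hne)))
    fun ℓ _ => Nat.ordProj_dvd n ℓ

theorem lemma_3_8_general (a b : ℕ) (hab : a.Coprime b) (hlt : b < a) (S : Finset ℕ)
    (hS : ∀ ℓ ∈ S, Nat.Prime ℓ) :
    ∃ C : ℕ, 0 < C ∧ ∀ m : ℕ, 1 ≤ m →
      (∏ ℓ ∈ S, ℓ ^ ((a ^ m - b ^ m).factorization ℓ)) ≤ C * m := by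
  let c (ℓ : ℕ) : ℕ := (a ^ (ℓ * (ℓ - 1)) - b ^ (ℓ * (ℓ - 1))).factorization ℓ
  refine ⟨∏ ℓ ∈ S, ℓ ^ c ℓ, Finset.prod_pos fun ℓ hℓ => pow_pos (hS ℓ hℓ).pos _, fun m hm => ?_⟩
  calc ∏ ℓ ∈ S, ℓ ^ ((a ^ m - b ^ m).factorization ℓ)
      ≤ ∏ ℓ ∈ S, ℓ ^ (c ℓ + m.factorization ℓ) :=
        Finset.prod_le_prod' fun ℓ hℓ => Nat.pow_le_pow_right (hS ℓ hℓ).pos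
          (factorization_pow_sub_pow_le (hS ℓ hℓ) hab hlt (Nat.ne_zero_of_lt hm))
    _ = (∏ ℓ ∈ S, ℓ ^ c ℓ) * ∏ ℓ ∈ S, ℓ ^ m.factorization ℓ := by
        simp only [pow_add, Finset.prod_mul_distrib]
    _ ≤ (∏ ℓ ∈ S, ℓ ^ c ℓ) * m :=
        Nat.mul_le_mul_left _ (Nat.le_of_dvd hm (prod_pow_factorization_dvd hS m))

/-- **Lemma 3.8.** Let `p` be a prime and `S` a finite set of primes. There exists a
constant `C > 0`, depending only on `p` and `S`, such that for every `m ≥ 1` the greatest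
divisor of `p ^ m - 1` all of whose prime divisors belong to `S`, namely
`∏_{ℓ ∈ S} ℓ ^ v_ℓ(p ^ m - 1)`, is at most `C · m`. -/
theorem lemma_3_8 (p : ℕ) (hp : p.Prime) (S : Finset ℕ) (hS : ∀ ℓ ∈ S, Nat.Prime ℓ) :
    ∃ C : ℕ, 0 < C ∧ ∀ m : ℕ, 1 ≤ m →
      (∏ ℓ ∈ S, ℓ ^ ((p ^ m - 1).factorization ℓ)) ≤ C * m := by
  simpa only [one_pow] using
    lemma_3_8_general p 1 (Nat.coprime_one_right p) hp.one_lt S hS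
end

section
/- (Proposition 3.11, combined with the descent of Definition/Proposition 3.5) Let k be a finite field of cardinality q and characteristic p, let K be a function field of one variable over k, and let Σ be a k-large set of prime numbers. Let f, g ∈ K ∖ k. Assume that for all but finitely many places O of K with f ∈ O and g ∈ O, there exist nonzero elements a, b of an algebraic closure of the residue field κ(O), both of Σ'-primary order, such that f(O) = a + b·g(O) holds in that algebraic closure. Then there exist a, b ∈ k^× of Σ'-primary order such that f = a + b·g in K. -/
/-!
For each `n` choose a place of `K` over a place of degree `ℓ₀ ^ n` of `k(g)`, where `ℓ₀` comes from
the largeness of `S`. If `f = a + b * g` at this place with `a`, `b` of `S'`-primary order, then `a`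
and `b` have a common Frobenius period `m` not divisible by `ℓ₀ ^ N`, whereas the residue of `g` has
period exactly `ℓ₀ ^ n`. Applying the `m`-th power of Frobenius to the relation therefore expresses
`a` and `b` through the residues of `f` and `g`, whose degrees divide `ℓ₀ ^ n * d !`, where
`d` is the degree of an equation for `f` over `k(g)`. Hence the periods of `a` and `b` divide
`gcd (m, ℓ₀ ^ n * d !)`, which divides `M = ℓ₀ ^ N * d !`, so that `a` and `b` lie in a fixed finite
field with `Q = q ^ M` elements.

Consequently `b` is the residue of the function `s = (f ^ Q - f) / (g ^ Q - g)`, and `a` that of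
`t = f - s * g`. The functions `s ^ Q - s` and `t ^ Q - t` vanish at these infinitely many places,
so they are zero; thus `s` and `t` are algebraic over `k`, and being constants they have the same
multiplicative orders as their residues `b` and `a`.
-/

section Arithmetic

lemma not_prime_pow_dvd_lcm {l N m₁ m₂ : ℕ} (hl : l.Prime)
    (h₁ : ¬ l ^ N ∣ m₁) (h₂ : ¬ l ^ N ∣ m₂) : ¬ l ^ N ∣ m₁.lcm m₂ := by
  have hm₁ : m₁ ≠ 0 := by rintro rfl; exact h₁ (dvd_zero _)
  have hm₂ : m₂ ≠ 0 := by rintro rfl; exact h₂ (dvd_zero _)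
  rw [hl.pow_dvd_iff_le_factorization ‹_›] at h₁ h₂
  rw [hl.pow_dvd_iff_le_factorization (Nat.lcm_ne_zero hm₁ hm₂), Nat.factorization_lcm hm₁ hm₂,
    Finsupp.sup_apply, le_sup_iff]
  exact not_or_intro h₁ h₂

lemma gcd_prime_pow_mul_dvd {l N m : ℕ} (hl : l.Prime) (hm : ¬ l ^ N ∣ m) (n e : ℕ) :
    Nat.gcd (l ^ n * e) m ∣ l ^ N * e := by
  refine (Nat.gcd_mul_left_dvd_mul_gcd _ _ _).trans (mul_dvd_mul ?_ (Nat.gcd_dvd_left _ _))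
  obtain ⟨i, -, hi⟩ := (Nat.dvd_prime_pow hl).mp (Nat.gcd_dvd_left (l ^ n) m)
  have hiN : i ≤ N := by
    by_contra! hNi
    exact hm ((pow_dvd_pow l hNi.le).trans (hi ▸ Nat.gcd_dvd_right _ _))
  exact hi ▸ pow_dvd_pow l hiN

lemma orderOf_natCast_zmod_mul {m n : ℕ} (h : m.Coprime n) (q : ℕ) :
    orderOf (q : ZMod (m * n)) = (orderOf (q : ZMod m)).lcm (orderOf (q : ZMod n)) := by
  rw [← MulEquiv.orderOf_eq (ZMod.chineseRemainder h : ZMod (m * n) ≃* ZMod m × ZMod n),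
    Prod.orderOf]
  simp

lemma not_prime_pow_dvd_orderOf_natCast_zmod {l N q d : ℕ} (hl : l.Prime) (hN : N ≠ 0)
    (hd : d ≠ 0)
    (h : ∀ r, r.Prime → r ∣ d → ∀ j, 1 ≤ j → ¬ l ^ N ∣ orderOf (q : ZMod (r ^ j))) :
    ¬ l ^ N ∣ orderOf (q : ZMod d) := by
  induction d using Nat.recOnPosPrimePosCoprime with
  | zero => exact absurd rfl hd
  | one =>
    rw [Subsingleton.elim (q : ZMod 1) 1, orderOf_one, Nat.dvd_one, Nat.pow_eq_one]
    exact not_or_intro hl.ne_one hN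
  | prime_pow r j hr hj => exact h r hr (dvd_pow_self r hj.ne') j hj
  | coprime m n hm hn hmn ihm ihn =>
    rw [orderOf_natCast_zmod_mul hmn]
    exact not_prime_pow_dvd_lcm hl
      (ihm (by lia) fun r hr hrm => h r hr (hrm.mul_right n))
      (ihn (by lia) fun r hr hrn => h r hr (hrn.mul_left m))

/-- `m` does not divide the order of `q` modulo any `d ≠ 0` all of whose prime divisors lie outside
`S ∪ {p}`: the condition of `IsLargeFor` for composite moduli. -/
def OrdersAvoid (q p : ℕ) (S : Set ℕ) (m : ℕ) : Prop :=
  ∀ d ≠ 0, (∀ r, r.Prime → r ∣ d → r ∉ S ∧ r ≠ p) → ¬ m ∣ orderOf (q : ZMod d)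

lemma IsLargeFor.exists_ordersAvoid_prime_pow {q p : ℕ} {S : Set ℕ} (h : IsLargeFor q p S) :
    ∃ l N : ℕ, l.Prime ∧ OrdersAvoid q p S (l ^ N) := by
  obtain ⟨l, N, hl, hN⟩ := h
  refine ⟨l, N + 1, hl, fun d hd hdS => ?_⟩
  refine not_prime_pow_dvd_orderOf_natCast_zmod hl N.succ_ne_zero hd fun r hr hrd j hj hdvd => ?_
  obtain ⟨hrS, hrp⟩ := hdS r hr hrd
  exact hN r ⟨hr, hrS⟩ hr hrp j hj ((pow_dvd_pow l N.le_succ).trans hdvd)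

end Arithmetic

section Frobenius

open Function FiniteField Polynomial
open scoped Nat

lemma isPeriodicPt_factorial_card_of_iterate_mem {α : Type*} {τ : α → α} (hτ : Injective τ)
    {s : Finset α} {x : α} (hs : ∀ i, τ^[i] x ∈ s) : IsPeriodicPt τ s.card ! x := by
  have hcard : s.card < (Finset.range (s.card + 1)).card := by simp
  obtain ⟨i, hi, j, hj, hij, heq⟩ :=
    Finset.exists_ne_map_eq_of_card_lt_of_maps_to hcard (f := fun i => τ^[i] x) fun i _ => hs i
  wlog hlt : i < j generalizing i j
  · exact this j hj i hi hij.symm heq.symm (by lia)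
  have hperiod : IsPeriodicPt τ (j - i) x := by
    apply hτ.iterate i
    rw [← iterate_add_apply, Nat.add_sub_cancel' hlt.le]
    exact heq.symm
  rw [Finset.mem_range] at hj
  exact hperiod.trans_dvd (Nat.dvd_factorial (by lia) (by lia))

lemma isPeriodicPt_factorial_natDegree_of_isRoot {E : Type*} [Field E] {τ : E →+* E} {R : E[X]}
    (hR : R ≠ 0) (hτ : R.map τ = R) {x : E} (hx : R.IsRoot x) :
    IsPeriodicPt τ R.natDegree ! x := by
  classical
  have hroot : ∀ i, R.IsRoot (τ^[i] x) := by
    intro i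
    induction i with
    | zero => exact hx
    | succ i ih =>
      rw [iterate_succ_apply', ← hτ]
      exact ih.map
  have hmem : ∀ i, τ^[i] x ∈ R.roots.toFinset := fun i => by
    rw [Multiset.mem_toFinset]
    exact (mem_roots hR).mpr (hroot i)
  exact (isPeriodicPt_factorial_card_of_iterate_mem τ.injective hmem).trans_dvd
    (Nat.factorial_dvd_factorial ((Multiset.toFinset_card_le _).trans R.card_roots'))

/-- The slope `b` of a relation `x = a + b * y` whose coefficients `a`, `b` are fixed by `σ`,
obtained by subtracting the relation from its image under `σ`; only meaningful when `σ y ≠ y`. -/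
def affineSlope {E : Type*} [Field E] (σ : E → E) (x y : E) : E :=
  (σ x - x) / (σ y - y)

/-- The intercept `a` of a relation `x = a + b * y` with `σ`-fixed coefficients. -/
def affineIntercept {E : Type*} [Field E] (σ : E → E) (x y : E) : E :=
  x - affineSlope σ x y * y

section Affine

variable {E : Type*} [Field E] {F : E →+* E} {a b x y : E} {m : ℕ}

lemma affineSlope_iterate_eq (h : x = a + b * y) (ha : IsPeriodicPt F m a)
    (hb : IsPeriodicPt F m b) (hy : ¬ IsPeriodicPt F m y) : affineSlope F^[m] x y = b := by
  rw [affineSlope, div_eq_iff (sub_ne_zero.mpr hy), h, iterate_map_add, iterate_map_mul, ha.eq,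
    hb.eq]
  ring

lemma affineIntercept_iterate_eq (h : x = a + b * y) (ha : IsPeriodicPt F m a)
    (hb : IsPeriodicPt F m b) (hy : ¬ IsPeriodicPt F m y) : affineIntercept F^[m] x y = a := by
  rw [affineIntercept, affineSlope_iterate_eq h ha hb hy, h, add_sub_cancel_right]

lemma isPeriodicPt_affineSlope_iterate {d : ℕ} (hx : IsPeriodicPt F d x)
    (hy : IsPeriodicPt F d y) : IsPeriodicPt F d (affineSlope F^[m] x y) := by
  have hdiv (u v : E) : F^[d] (u / v) = F^[d] u / F^[d] v := by
    simp only [← RingHom.coe_pow, map_div₀]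
  have hcomm (z : E) : F^[d] (F^[m] z) = F^[m] (F^[d] z) := Commute.iterate_iterate_self F d m z
  rw [IsPeriodicPt, IsFixedPt, affineSlope, hdiv, iterate_map_sub, iterate_map_sub, hcomm, hcomm,
    hx.eq, hy.eq]

lemma isPeriodicPt_affineIntercept_iterate {d : ℕ} (hx : IsPeriodicPt F d x)
    (hy : IsPeriodicPt F d y) : IsPeriodicPt F d (affineIntercept F^[m] x y) := by
  rw [IsPeriodicPt, IsFixedPt, affineIntercept, iterate_map_sub, iterate_map_mul,
    (isPeriodicPt_affineSlope_iterate hx hy).eq, hx.eq, hy.eq]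

end Affine

variable {k Ω : Type*} [Field k] [Field Ω] [Algebra k Ω]

lemma map_aeval_ne_zero_of_natDegree_lt {P : k[X]} (hP : Irreducible P) {y : Ω}
    (hy : aeval y P = 0) {R : k[X][X]} (hR : R ≠ 0)
    (hdeg : R.leadingCoeff.natDegree < P.natDegree) : R.map (aeval y).toRingHom ≠ 0 := by
  intro hmap
  have hlead : aeval y R.leadingCoeff = 0 := by
    simpa using congrArg (coeff · R.natDegree) hmap
  exact leadingCoeff_ne_zero.mpr hR
    (eq_zero_of_dvd_of_natDegree_lt ((hP.dvd_iff_aeval_eq_zero hy).mp hlead) hdeg)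

variable [Fintype k]

lemma isPeriodicPt_frobeniusAlgHom_iff {A : Type*} [CommRing A] [Algebra k A] {j : ℕ} {x : A} :
    IsPeriodicPt (frobeniusAlgHom k A) j x ↔ x ^ Fintype.card k ^ j = x := by
  rw [IsPeriodicPt, IsFixedPt, coe_frobeniusAlgHom, pow_iterate]

lemma isPeriodicPt_frobeniusAlgHom_iff_natDegree_dvd {P : k[X]} (hP : Irreducible P) {y : Ω}
    (hy : aeval y P = 0) {j : ℕ} :
    IsPeriodicPt (frobeniusAlgHom k Ω) j y ↔ P.natDegree ∣ j := by
  rw [hP.natDegree_dvd_iff_dvd_X_pow_card_pow_sub_X, ← hP.dvd_iff_aeval_eq_zero hy,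
    isPeriodicPt_frobeniusAlgHom_iff, Nat.card_eq_fintype_card]
  simp [sub_eq_zero]

lemma isPeriodicPt_frobeniusAlgHom_of_eval₂_eq_zero {x y : Ω} {d : ℕ}
    (hy : IsPeriodicPt (frobeniusAlgHom k Ω) d y) {R : k[X][X]}
    (hR : R.map (aeval y).toRingHom ≠ 0) (hxy : R.eval₂ (aeval y).toRingHom x = 0) :
    IsPeriodicPt (frobeniusAlgHom k Ω) (d * R.natDegree !) x := by
  set τ : Ω →ₐ[k] Ω := frobeniusAlgHom k Ω ^ d with hτ
  have hτR : (R.map (aeval y).toRingHom).map τ.toRingHom = R.map (aeval y).toRingHom := by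
    have hcomp : τ.comp (aeval y) = aeval y := by
      ext
      simpa [hτ] using hy.eq
    rw [Polynomial.map_map]
    exact congrArg (R.map ·.toRingHom) hcomp
  have hx : IsPeriodicPt τ (R.map (aeval y).toRingHom).natDegree ! x :=
    isPeriodicPt_factorial_natDegree_of_isRoot hR hτR ((eval_map _ _).trans hxy)
  rw [hτ, AlgHom.coe_pow] at hx
  rw [IsPeriodicPt, IsFixedPt, iterate_mul]
  exact hx.trans_dvd (Nat.factorial_dvd_factorial natDegree_map_le)

lemma PrimaryOutside.notMem_and_ne_char {S : Set ℕ} {a : Ω} (ha : PrimaryOutside S a) (p : ℕ)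
    [CharP Ω p] {r : ℕ} (hr : r.Prime) (hra : r ∣ orderOf a) : r ∉ S ∧ r ≠ p := by
  refine ⟨ha.2 r hr hra, ?_⟩
  rintro rfl
  have : NeZero (orderOf a) := ⟨ha.1.orderOf_pos.ne'⟩
  exact (IsPrimitiveRoot.orderOf a).neZero'.out ((CharP.cast_eq_zero_iff Ω r _).mpr hra)

lemma PrimaryOutside.exists_isPeriodicPt {p e : ℕ} [CharP k p] {S : Set ℕ}
    (hS : OrdersAvoid (Fintype.card k) p S e) {a : Ω} (ha : PrimaryOutside S a) :
    ∃ m, ¬ e ∣ m ∧ IsPeriodicPt (frobeniusAlgHom k Ω) m a := by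
  have : CharP Ω p := charP_of_injective_algebraMap' k p
  refine ⟨orderOf (Fintype.card k : ZMod (orderOf a)),
    hS _ ha.1.orderOf_pos.ne' fun r => ha.notMem_and_ne_char p, ?_⟩
  have hmod : Fintype.card k ^ orderOf (Fintype.card k : ZMod (orderOf a)) ≡ 1 [MOD orderOf a] := by
    rw [← ZMod.natCast_eq_natCast_iff, Nat.cast_pow, pow_orderOf_eq_one, Nat.cast_one]
  rw [isPeriodicPt_frobeniusAlgHom_iff, ← pow_mod_orderOf, hmod, pow_mod_orderOf, pow_one]

lemma isPeriodicPt_of_primaryOutside_of_eq_add_mul {p l N n : ℕ} [CharP k p] (hl : l.Prime)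
    {S : Set ℕ} (hS : OrdersAvoid (Fintype.card k) p S (l ^ N))
    {a b x y : Ω} (ha : PrimaryOutside S a) (hb : PrimaryOutside S b) (hxy : x = a + b * y)
    {P : k[X]} (hP : Irreducible P) (hdeg : P.natDegree = l ^ n) (hNn : N ≤ n)
    (hPy : aeval y P = 0) {R : k[X][X]} (hR : R.map (aeval y).toRingHom ≠ 0)
    (hRxy : R.eval₂ (aeval y).toRingHom x = 0) :
    IsPeriodicPt (frobeniusAlgHom k Ω) (l ^ N * R.natDegree !) a ∧
      IsPeriodicPt (frobeniusAlgHom k Ω) (l ^ N * R.natDegree !) b := by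
  have hy {j : ℕ} : IsPeriodicPt (frobeniusAlgHom k Ω) j y ↔ l ^ n ∣ j :=
    hdeg ▸ isPeriodicPt_frobeniusAlgHom_iff_natDegree_dvd hP hPy
  have hx : IsPeriodicPt (frobeniusAlgHom k Ω) (l ^ n * R.natDegree !) x :=
    isPeriodicPt_frobeniusAlgHom_of_eval₂_eq_zero (hy.mpr dvd_rfl) hR hRxy
  obtain ⟨m₁, hm₁, ha₁⟩ := ha.exists_isPeriodicPt hS
  obtain ⟨m₂, hm₂, hb₂⟩ := hb.exists_isPeriodicPt hS
  have hm : ¬ l ^ N ∣ m₁.lcm m₂ := not_prime_pow_dvd_lcm hl hm₁ hm₂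
  have ham := ha₁.trans_dvd (Nat.dvd_lcm_left m₁ m₂)
  have hbm := hb₂.trans_dvd (Nat.dvd_lcm_right m₁ m₂)
  have hym : ¬ IsPeriodicPt (frobeniusAlgHom k Ω) (m₁.lcm m₂) y :=
    fun h => hm ((pow_dvd_pow l hNn).trans (hy.mp h))
  have hyd : IsPeriodicPt (frobeniusAlgHom k Ω) (l ^ n * R.natDegree !) y :=
    hy.mpr (dvd_mul_right _ _)
  let F : Ω →+* Ω := (frobeniusAlgHom k Ω).toRingHom
  have had : IsPeriodicPt F (l ^ n * R.natDegree !) a :=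
    affineIntercept_iterate_eq (F := F) hxy ham hbm hym ▸
      isPeriodicPt_affineIntercept_iterate hx hyd
  have hbd : IsPeriodicPt F (l ^ n * R.natDegree !) b :=
    affineSlope_iterate_eq (F := F) hxy ham hbm hym ▸ isPeriodicPt_affineSlope_iterate hx hyd
  -- `m₁.lcm m₂` is not bounded and `l ^ n * R.natDegree !` grows with `n`, but their gcd does not.
  have hgcd := gcd_prime_pow_mul_dvd hl hm n R.natDegree !
  exact ⟨(had.gcd ham).trans_dvd hgcd, (hbd.gcd hbm).trans_dvd hgcd⟩

end Frobenius

section PrimaryAffine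

/-- The relation `x = a + b * y` for some nonzero torsion elements `a`, `b` whose orders have no
prime divisor in `S`. -/
def IsPrimaryAffine (S : Set ℕ) {E : Type*} [Field E] (x y : E) : Prop :=
  ∃ a b : E, a ≠ 0 ∧ b ≠ 0 ∧ PrimaryOutside S a ∧ PrimaryOutside S b ∧ x = a + b * y

variable {S : Set ℕ} {E E' : Type*} [Field E] [Field E']

lemma PrimaryOutside.ne_zero {a : E} (ha : PrimaryOutside S a) : a ≠ 0 :=
  ha.1.isUnit.ne_zero

lemma PrimaryOutside.of_orderOf_eq {M M' : Type*} [Monoid M] [Monoid M'] {a : M} {a' : M'}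
    (ha : PrimaryOutside S a) (h : orderOf a' = orderOf a) : PrimaryOutside S a' :=
  ⟨orderOf_pos_iff.mp (h ▸ ha.1.orderOf_pos), h ▸ ha.2⟩

lemma isPrimaryAffine_of_primaryOutside_affine {σ : E → E} {x y : E}
    (ha : PrimaryOutside S (affineIntercept σ x y)) (hb : PrimaryOutside S (affineSlope σ x y)) :
    IsPrimaryAffine S x y :=
  ⟨_, _, ha.ne_zero, hb.ne_zero, ha, hb, (sub_add_cancel x _).symm⟩

lemma PrimaryOutside.exists_algebraMap_eq [Algebra E E']
    (halg : ∀ x : E', IsAlgebraic E x → x ∈ (algebraMap E E').range) {a' : E'}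
    (ha' : PrimaryOutside S a') : ∃ a : E, PrimaryOutside S a ∧ algebraMap E E' a = a' := by
  have hint : IsIntegral E a' :=
    .of_pow ha'.1.orderOf_pos ((pow_orderOf_eq_one a').symm ▸ isIntegral_one)
  obtain ⟨a, rfl⟩ := halg a' hint.isAlgebraic
  exact ⟨a, ha'.of_orderOf_eq
    (orderOf_injective (algebraMap E E' : E →* E') (algebraMap E E').injective a).symm, rfl⟩

lemma IsPrimaryAffine.exists_eq_algebraMap_add_algebraMap_mul [Algebra E E']
    (halg : ∀ x : E', IsAlgebraic E x → x ∈ (algebraMap E E').range) {x y : E'}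
    (h : IsPrimaryAffine S x y) :
    ∃ a b : E, a ≠ 0 ∧ b ≠ 0 ∧ PrimaryOutside S a ∧ PrimaryOutside S b ∧
      x = algebraMap E E' a + algebraMap E E' b * y := by
  obtain ⟨_, _, -, -, ha', hb', hxy⟩ := h
  obtain ⟨a, ha, rfl⟩ := ha'.exists_algebraMap_eq halg
  obtain ⟨b, hb, rfl⟩ := hb'.exists_algebraMap_eq halg
  exact ⟨a, b, ha.ne_zero, hb.ne_zero, ha, hb, hxy⟩

end PrimaryAffine

section Residue

open Function FiniteField Polynomial

variable {K Ω : Type*} [Field K] [Field Ω] {O : ValuationSubring K}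

/-- `x` lies in the valuation ring `O` and takes the value `y` under `ev : O →+* Ω`, which is
thought of as the residue map followed by an embedding of the residue field. -/
def HasResidue (ev : O →+* Ω) (x : K) (y : Ω) : Prop :=
  ∃ z : O, (z : K) = x ∧ ev z = y

namespace HasResidue

variable {ev : O →+* Ω} {x x' : K} {y y' : Ω}

protected lemma unique (h : HasResidue ev x y) (h' : HasResidue ev x y') : y = y' := by
  obtain ⟨z, rfl, rfl⟩ := h
  obtain ⟨z', hz, rfl⟩ := h'
  rw [Subtype.ext hz]

protected lemma add (h : HasResidue ev x y) (h' : HasResidue ev x' y') :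
    HasResidue ev (x + x') (y + y') := by
  obtain ⟨z, rfl, rfl⟩ := h
  obtain ⟨z', rfl, rfl⟩ := h'
  exact ⟨z + z', rfl, map_add ev z z'⟩

protected lemma sub (h : HasResidue ev x y) (h' : HasResidue ev x' y') :
    HasResidue ev (x - x') (y - y') := by
  obtain ⟨z, rfl, rfl⟩ := h
  obtain ⟨z', rfl, rfl⟩ := h'
  exact ⟨z - z', rfl, map_sub ev z z'⟩

protected lemma mul (h : HasResidue ev x y) (h' : HasResidue ev x' y') :
    HasResidue ev (x * x') (y * y') := by
  obtain ⟨z, rfl, rfl⟩ := h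
  obtain ⟨z', rfl, rfl⟩ := h'
  exact ⟨z * z', rfl, map_mul ev z z'⟩

protected lemma one : HasResidue ev 1 1 :=
  ⟨1, rfl, map_one ev⟩

protected lemma pow (h : HasResidue ev x y) (n : ℕ) : HasResidue ev (x ^ n) (y ^ n) := by
  obtain ⟨z, rfl, rfl⟩ := h
  exact ⟨z ^ n, rfl, map_pow ev z n⟩

protected lemma eval₂ {A : Type*} [Semiring A] {i : A →+* K} {j : A →+* Ω}
    (hij : ∀ c, HasResidue ev (i c) (j c)) (h : HasResidue ev x y) (R : A[X]) :
    HasResidue ev (R.eval₂ i x) (R.eval₂ j y) := by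
  induction R using Polynomial.induction_on' with
  | add R₁ R₂ h₁ h₂ => simpa only [eval₂_add] using h₁.add h₂
  | monomial n c => simpa only [eval₂_monomial] using (hij c).mul (h.pow n)

protected lemma div [IsLocalHom ev] (h : HasResidue ev x y) (h' : HasResidue ev x' y')
    (hy' : y' ≠ 0) : HasResidue ev (x / x') (y / y') := by
  obtain ⟨z, rfl, rfl⟩ := h
  obtain ⟨z', rfl, rfl⟩ := h'
  obtain ⟨u, rfl⟩ := isUnit_of_map_unit ev z' hy'.isUnit
  refine ⟨z * (u⁻¹ : Oˣ), ?_, ?_⟩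
  · rw [div_eq_mul_inv, ← O.subtype_apply u, ← map_units_inv]
    rfl
  · rw [map_mul, map_units_inv, div_eq_mul_inv]

protected lemma mem_nonunits_iff [IsLocalHom ev] (h : HasResidue ev x y) :
    x ∈ O.nonunits ↔ y = 0 := by
  obtain ⟨z, rfl, rfl⟩ := h
  rw [ValuationSubring.coe_mem_nonunits_iff, IsLocalRing.mem_maximalIdeal, mem_nonunits_iff,
    ← isUnit_map_iff ev, isUnit_iff_ne_zero, not_not]

lemma eq_zero_of_pow_eq_self {m : ℕ} (hm : 1 < m) (hx : x ^ m = x) (h : HasResidue ev x 0) :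
    x = 0 := by
  by_contra hx0
  have hpow : x ^ (m - 1) = 1 := by
    apply mul_right_cancel₀ hx0
    rw [← pow_succ, Nat.sub_add_cancel hm.le, hx, one_mul]
  have hzero : HasResidue ev 1 0 := by
    simpa only [hpow, zero_pow (Nat.sub_ne_zero_of_lt hm)] using h.pow (m - 1)
  exact one_ne_zero (HasResidue.one.unique hzero)

section Frobenius

variable {k : Type*} [Field k] [Fintype k] [Algebra k K] {M : ℕ}

lemma orderOf_eq_of_isPeriodicPt (h : HasResidue ev x y) (hM : M ≠ 0)
    (hx : IsPeriodicPt (frobeniusAlgHom k K) M x) : orderOf x = orderOf y := by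
  rw [orderOf_eq_orderOf_iff]
  refine fun n => ⟨fun hn => (hn ▸ h.pow n).unique .one, fun hn => ?_⟩
  have hfix : IsPeriodicPt (frobeniusAlgHom k K) M (x ^ n - 1) := by
    rw [IsPeriodicPt, IsFixedPt, iterate_map_sub, iterate_map_pow, iterate_map_one, hx.eq]
  have hres : HasResidue ev (x ^ n - 1) 0 := by simpa only [hn, sub_self] using (h.pow n).sub .one
  exact sub_eq_zero.mp (hres.eq_zero_of_pow_eq_self (Nat.one_lt_pow hM Fintype.one_lt_card)
    (isPeriodicPt_frobeniusAlgHom_iff.mp hfix))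

variable [Algebra k Ω]

lemma iterate_frobeniusAlgHom (h : HasResidue ev x y) (m : ℕ) :
    HasResidue ev ((frobeniusAlgHom k K)^[m] x) ((frobeniusAlgHom k Ω)^[m] y) := by
  simpa only [coe_frobeniusAlgHom, pow_iterate] using h.pow _

variable [IsLocalHom ev]

protected lemma affineSlope (h : HasResidue ev x y) (h' : HasResidue ev x' y')
    (hy' : ¬ IsPeriodicPt (frobeniusAlgHom k Ω) M y') :
    HasResidue ev (affineSlope (frobeniusAlgHom k K)^[M] x x')
      (affineSlope (frobeniusAlgHom k Ω)^[M] y y') :=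
  ((h.iterate_frobeniusAlgHom M).sub h).div ((h'.iterate_frobeniusAlgHom M).sub h')
    (sub_ne_zero.mpr hy')

protected lemma affineIntercept (h : HasResidue ev x y) (h' : HasResidue ev x' y')
    (hy' : ¬ IsPeriodicPt (frobeniusAlgHom k Ω) M y') :
    HasResidue ev (affineIntercept (frobeniusAlgHom k K)^[M] x x')
      (affineIntercept (frobeniusAlgHom k Ω)^[M] y y') :=
  h.sub ((h.affineSlope h' hy').mul h')

protected lemma primaryOutside {S : Set ℕ} (h : HasResidue ev x y) (hS : PrimaryOutside S y)
    (hM : M ≠ 0) (hy : IsPeriodicPt (frobeniusAlgHom k Ω) M y)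
    (hx : (frobeniusAlgHom k K)^[M] x - x ∈ O.nonunits → (frobeniusAlgHom k K)^[M] x - x = 0) :
    PrimaryOutside S x := by
  have hmem : (frobeniusAlgHom k K)^[M] x - x ∈ O.nonunits :=
    ((h.iterate_frobeniusAlgHom M).sub h).mem_nonunits_iff.mpr (sub_eq_zero.mpr hy)
  exact hS.of_orderOf_eq (h.orderOf_eq_of_isPeriodicPt hM (sub_eq_zero.mp (hx hmem)))

end Frobenius

end HasResidue

end Residue

section Places

open Function FiniteField Polynomial Filter

variable {k K : Type*} [Field k] [Field K] [Algebra k K] {g h : K} {P P' : k[X]}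
  {O : ValuationSubring K}

/-- `O` is a valuation ring of `K` containing `k` and `g`, at which `P(g)` is not a unit; if `P` is
irreducible, such an `O` is a place lying over the place `P` of `k(g)`. -/
structure IsPlaceOver (g : K) (P : k[X]) (O : ValuationSubring K) : Prop where
  algebraMap_mem : ∀ c : k, algebraMap k K c ∈ O
  mem : g ∈ O
  aeval_mem_nonunits : aeval g P ∈ O.nonunits

lemma exists_isPlaceOver (hg : Transcendental k g) (hP : ¬ IsUnit P) :
    ∃ O : ValuationSubring K, IsPlaceOver g P O := by
  let e : k[X] ≃+* (aeval (R := k) g).toRingHom.range :=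
    RingEquiv.ofLeftInverse (leftInverse_invFun (transcendental_iff_injective.mp hg))
  obtain ⟨O, hO, hPO⟩ := Ideal.image_subset_nonunits_valuationSubring
    (A := (aeval (R := k) g).toRingHom.range) (Ideal.span {e P})
    (by rwa [Ne, Ideal.span_singleton_eq_top, MulEquiv.isUnit_map])
  exact ⟨O, fun c => hO ⟨C c, aeval_C g c⟩, hO ⟨X, aeval_X g⟩,
    hPO ⟨e P, Ideal.subset_span rfl, rfl⟩⟩

namespace IsPlaceOver

lemma ne_top (hO : IsPlaceOver g P O) (hg : Transcendental k g) (hP : P ≠ 0) : O ≠ ⊤ := by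
  rintro rfl
  rcases (ValuationSubring.mem_nonunits_iff_or _).mp hO.aeval_mem_nonunits with h | h
  · exact hP (transcendental_iff.mp hg P h)
  · exact h trivial

lemma aeval_mem (hO : IsPlaceOver g P O) (Q : k[X]) : aeval g Q ∈ O := by
  rw [aeval_eq_sum_range]
  refine sum_mem fun i _ => ?_
  rw [Algebra.smul_def]
  exact mul_mem (hO.algebraMap_mem _) (pow_mem hO.mem i)

/-- Evaluation of polynomials at the residue class of `g`. -/
noncomputable def evalResidue (hO : IsPlaceOver g P O) : k[X] →+* IsLocalRing.ResidueField O :=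
  (IsLocalRing.residue O).comp ((aeval g).toRingHom.codRestrict O.toSubring hO.aeval_mem)

lemma hasResidue_evalResidue (hO : IsPlaceOver g P O) (Q : k[X]) :
    HasResidue (IsLocalRing.residue O) ((aeval g).toRingHom Q) (hO.evalResidue Q) :=
  ⟨⟨_, hO.aeval_mem Q⟩, rfl, rfl⟩

lemma dvd_of_aeval_mem_nonunits (hO : IsPlaceOver g P O) (hP : Irreducible P) {Q : k[X]}
    (hQ : aeval g Q ∈ O.nonunits) : P ∣ Q := by
  by_contra hPQ
  obtain ⟨u, v, huv⟩ := hP.coprime_iff_not_dvd.mpr hPQ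
  have hP0 : hO.evalResidue P = 0 :=
    (hO.hasResidue_evalResidue P).mem_nonunits_iff.mp hO.aeval_mem_nonunits
  have hQ0 : hO.evalResidue Q = 0 := (hO.hasResidue_evalResidue Q).mem_nonunits_iff.mp hQ
  simpa [hP0, hQ0] using congrArg hO.evalResidue huv

lemma natDegree_eq (hO : IsPlaceOver g P O) (hO' : IsPlaceOver g P' O) (hP : Irreducible P)
    (hP' : Irreducible P') : P.natDegree = P'.natDegree :=
  natDegree_eq_of_degree_eq <| degree_eq_degree_of_associated <| associated_of_dvd_dvd
    (hO.dvd_of_aeval_mem_nonunits hP hO'.aeval_mem_nonunits)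
    (hO'.dvd_of_aeval_mem_nonunits hP' hO.aeval_mem_nonunits)

lemma aeval_coeff_zero_mem_nonunits (hO : IsPlaceOver g P O) {R : k[X][X]}
    (hR : R.eval₂ (aeval g).toRingHom h = 0) (hh : h ∈ O.nonunits) :
    aeval g (R.coeff 0) ∈ O.nonunits := by
  have hres : HasResidue (IsLocalRing.residue O) h 0 :=
    ⟨⟨h, ValuationSubring.nonunits_subset hh⟩, rfl, (IsLocalRing.residue_eq_zero_iff _).mpr
      (ValuationSubring.coe_mem_nonunits_iff.mp hh)⟩
  have hR0 := hres.eval₂ hO.hasResidue_evalResidue R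
  rw [hR, eval₂_at_zero] at hR0
  exact (hO.hasResidue_evalResidue _).mem_nonunits_iff.mpr
    (hR0.mem_nonunits_iff.mp O.nonunits.zero_mem)

end IsPlaceOver

lemma exists_irreducible_natDegree_eq (k : Type*) [Field k] [Finite k] {d : ℕ} (hd : d ≠ 0) :
    ∃ P : k[X], Irreducible P ∧ P.natDegree = d := by
  obtain ⟨p, _⟩ := CharP.exists k
  have : Fact p.Prime := ⟨CharP.char_is_prime k p⟩
  have : NeZero d := ⟨hd⟩
  let B := Field.powerBasisOfFiniteOfSeparable k (FiniteField.Extension k p d)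
  refine ⟨minpoly k B.gen, minpoly.irreducible B.isIntegral_gen, ?_⟩
  rw [B.natDegree_minpoly, ← B.finrank, finrank_extension]

lemma IsFunctionFieldOneVar.trdeg_le_one (hK : IsFunctionFieldOneVar k K) :
    Algebra.trdeg k K ≤ 1 := by
  obtain ⟨⟨t, -, hfin⟩, -⟩ := hK
  have halg : Algebra.IsAlgebraic (Algebra.adjoin k {t}) K :=
    ⟨fun x => IntermediateField.isAlgebraic_adjoin_iff.mp (Algebra.IsAlgebraic.isAlgebraic x)⟩
  simpa using Algebra.IsAlgebraic.trdeg_le_cardinalMk (R := k) (A := K) ({t} : Set K)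

lemma isAlgebraic_adjoin_of_trdeg_le_one (htr : Algebra.trdeg k K ≤ 1)
    (hg : Transcendental k g) : Algebra.IsAlgebraic (Algebra.adjoin k {g}) K := by
  have hind : AlgebraicIndependent k fun _ : PUnit => g :=
    algebraicIndependent_unique_type_iff.mpr hg
  have hbasis := hind.isTranscendenceBasis_of_trdeg_le_of_finite (by simpa using htr)
  have halg := hbasis.isAlgebraic
  rwa [Set.range_const] at halg

lemma exists_coeff_zero_ne_zero_eval₂_aeval_eq_zero (htr : Algebra.trdeg k K ≤ 1)
    (hg : Transcendental k g) (hh : h ≠ 0) :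
    ∃ R : k[X][X], R.coeff 0 ≠ 0 ∧ R.eval₂ (aeval g).toRingHom h = 0 := by
  have := isAlgebraic_adjoin_of_trdeg_le_one htr hg
  obtain ⟨R, hR0, hR⟩ := (Algebra.IsAlgebraic.isAlgebraic (R := Algebra.adjoin k {g})
    h).exists_nonzero_coeff_and_aeval_eq_zero (mem_nonZeroDivisors_of_ne_zero hh)
  let e : k[X] →+* Algebra.adjoin k {g} :=
    ((aeval g).codRestrict _ fun _ => aeval_mem_adjoin_singleton k g).toRingHom
  have he : Surjective e := by
    rintro ⟨x, hx⟩
    rw [Algebra.adjoin_singleton_eq_range_aeval] at hx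
    obtain ⟨c, hc⟩ := hx
    exact ⟨c, Subtype.ext hc⟩
  obtain ⟨R, rfl⟩ := map_surjective e he R
  rw [coeff_map] at hR0
  rw [aeval_def, eval₂_map] at hR
  exact ⟨R, ne_zero_of_map hR0, hR⟩

lemma exists_ne_zero_eval₂_aeval_eq_zero (htr : Algebra.trdeg k K ≤ 1) (hg : Transcendental k g)
    (h : K) : ∃ R : k[X][X], R ≠ 0 ∧ R.eval₂ (aeval g).toRingHom h = 0 := by
  rcases eq_or_ne h 0 with rfl | hh
  · exact ⟨X, X_ne_zero, eval₂_X _ _⟩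
  · obtain ⟨R, hR0, hR⟩ := exists_coeff_zero_ne_zero_eval₂_aeval_eq_zero htr hg hh
    exact ⟨R, fun hR' => hR0 (by rw [hR', coeff_zero]), hR⟩

lemma eventually_eq_zero_of_mem_nonunits {ι : Type*} {L : Filter ι} {P : ι → k[X]}
    {O : ι → ValuationSubring K} (htr : Algebra.trdeg k K ≤ 1) (hg : Transcendental k g)
    (hP : ∀ n, Irreducible (P n)) (hdeg : Tendsto (fun n => (P n).natDegree) L atTop)
    (hO : ∀ n, IsPlaceOver g (P n) (O n)) (h : K) :
    ∀ᶠ n in L, h ∈ (O n).nonunits → h = 0 := by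
  rcases eq_or_ne h 0 with rfl | hh
  · exact .of_forall fun _ _ => rfl
  obtain ⟨R, hR0, hR⟩ := exists_coeff_zero_ne_zero_eval₂_aeval_eq_zero htr hg hh
  filter_upwards [hdeg.eventually_gt_atTop (R.coeff 0).natDegree] with n hn hmem
  refine absurd (eq_zero_of_dvd_of_natDegree_lt ?_ hn) hR0
  exact (hO n).dvd_of_aeval_mem_nonunits (hP n) ((hO n).aeval_coeff_zero_mem_nonunits hR hmem)

lemma eventually_mem_of_isPlaceOver {ι : Type*} {L : Filter ι} {P : ι → k[X]}
    {O : ι → ValuationSubring K}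
    (htr : Algebra.trdeg k K ≤ 1) (hg : Transcendental k g) (hP : ∀ n, Irreducible (P n))
    (hdeg : Tendsto (fun n => (P n).natDegree) L atTop) (hO : ∀ n, IsPlaceOver g (P n) (O n))
    (f : K) : ∀ᶠ n in L, f ∈ O n := by
  filter_upwards [eventually_eq_zero_of_mem_nonunits htr hg hP hdeg hO f⁻¹] with n hn
  by_contra hf
  have hf0 : f = 0 := inv_eq_zero.mp (hn ((O n).inv_mem_nonunits_iff.mpr (.inr hf)))
  exact hf (hf0 ▸ (O n).zero_mem)

lemma exists_isPlaceOver_natDegree_eq_pow [Finite k] (hg : Transcendental k g) {l : ℕ}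
    (hl : 1 < l) :
    ∃ (P : ℕ → k[X]) (O : ℕ → ValuationSubring K), (∀ n, Irreducible (P n)) ∧
      (∀ n, (P n).natDegree = l ^ n) ∧ (∀ n, IsPlaceOver g (P n) (O n)) ∧ Injective O := by
  choose P hP hdeg using fun n => exists_irreducible_natDegree_eq k (pow_ne_zero n hl.ne_bot)
  choose O hO using fun n => exists_isPlaceOver hg (hP n).not_isUnit
  refine ⟨P, O, hP, hdeg, hO, fun m n hmn => Nat.pow_right_injective hl ?_⟩
  calc l ^ m = (P m).natDegree := (hdeg m).symm
    _ = (P n).natDegree := (hmn ▸ hO m).natDegree_eq (hO n) (hP m) (hP n)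
    _ = l ^ n := hdeg n

end Places

section Descent

open Function FiniteField Polynomial Filter
open scoped Nat

variable {k K : Type*} [Field k] [Fintype k] [Field K] [Algebra k K]

lemma exists_hasResidue_affine_of_isPrimaryAffine {p l N n : ℕ} [CharP k p] (hl : l.Prime)
    {S : Set ℕ} (hS : OrdersAvoid (Fintype.card k) p S (l ^ N))
    {P : k[X]} (hP : Irreducible P) (hdeg : P.natDegree = l ^ n)
    {R : k[X][X]} (hR : R ≠ 0) (hRdeg : R.leadingCoeff.natDegree < P.natDegree)
    (hMdeg : l ^ N * R.natDegree ! < P.natDegree)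
    {f g : K} (hfg : R.eval₂ (aeval g).toRingHom f = 0)
    {O : ValuationSubring K} (hPg : aeval g P ∈ O.nonunits)
    {Ω : Type*} [Field Ω] [Algebra k Ω] {ev : O →+* Ω} [IsLocalHom ev]
    (hk : ∀ c, HasResidue ev (algebraMap k K c) (algebraMap k Ω c))
    {x y : Ω} (hx : HasResidue ev f x) (hy : HasResidue ev g y) (hxy : IsPrimaryAffine S x y) :
    ∃ a b : Ω, PrimaryOutside S a ∧ PrimaryOutside S b ∧
      IsPeriodicPt (frobeniusAlgHom k Ω) (l ^ N * R.natDegree !) a ∧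
      IsPeriodicPt (frobeniusAlgHom k Ω) (l ^ N * R.natDegree !) b ∧
      HasResidue ev (affineIntercept (frobeniusAlgHom k K)^[l ^ N * R.natDegree !] f g) a ∧
      HasResidue ev (affineSlope (frobeniusAlgHom k K)^[l ^ N * R.natDegree !] f g) b := by
  obtain ⟨a, b, -, -, ha, hb, rfl⟩ := hxy
  have haeval (Q : k[X]) : HasResidue ev (aeval g Q) (aeval y Q) := hy.eval₂ hk Q
  have hPy : aeval y P = 0 := (haeval P).mem_nonunits_iff.mp hPg
  have hRxy : R.eval₂ (aeval y).toRingHom (a + b * y) = 0 :=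
    (hfg ▸ hx.eval₂ haeval R).mem_nonunits_iff.mp O.nonunits.zero_mem
  have hRy := map_aeval_ne_zero_of_natDegree_lt hP hPy hR hRdeg
  have hNn : N ≤ n := ((Nat.pow_lt_pow_iff_right hl.one_lt).mp <| hdeg ▸
    (Nat.le_mul_of_pos_right _ (Nat.factorial_pos _)).trans_lt hMdeg).le
  obtain ⟨haM, hbM⟩ :=
    isPeriodicPt_of_primaryOutside_of_eq_add_mul hl hS ha hb rfl hP hdeg hNn hPy hRy hRxy
  have hyM : ¬ IsPeriodicPt (frobeniusAlgHom k Ω) (l ^ N * R.natDegree !) y := fun h =>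
    hMdeg.not_ge (Nat.le_of_dvd (Nat.mul_pos (pow_pos hl.pos N) (Nat.factorial_pos _))
      ((isPeriodicPt_frobeniusAlgHom_iff_natDegree_dvd hP hPy).mp h))
  let F : Ω →+* Ω := (frobeniusAlgHom k Ω).toRingHom
  refine ⟨a, b, ha, hb, haM, hbM, ?_, ?_⟩
  · exact affineIntercept_iterate_eq (F := F) rfl haM hbM hyM ▸ hx.affineIntercept hy hyM
  · exact affineSlope_iterate_eq (F := F) rfl haM hbM hyM ▸ hx.affineSlope hy hyM

lemma IsPlaceOver.isPrimaryAffine {p l N n : ℕ} [CharP k p] (hl : l.Prime) {S : Set ℕ}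
    (hS : OrdersAvoid (Fintype.card k) p S (l ^ N)) {P : k[X]} (hP : Irreducible P)
    (hdeg : P.natDegree = l ^ n) {R : k[X][X]} (hR : R ≠ 0)
    (hRdeg : R.leadingCoeff.natDegree < P.natDegree)
    (hMdeg : l ^ N * R.natDegree ! < P.natDegree)
    {f g : K} (hfg : R.eval₂ (aeval g).toRingHom f = 0)
    {O : ValuationSubring K} (hO : IsPlaceOver g P O) (hf : f ∈ O)
    {Ω : Type*} [Field Ω] (ι : IsLocalRing.ResidueField O →+* Ω)
    (hres : IsPrimaryAffine S (ι (IsLocalRing.residue O ⟨f, hf⟩))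
      (ι (IsLocalRing.residue O ⟨g, hO.mem⟩)))
    (hfix : ∀ z ∈ ({affineIntercept (frobeniusAlgHom k K)^[l ^ N * R.natDegree !] f g,
        affineSlope (frobeniusAlgHom k K)^[l ^ N * R.natDegree !] f g} : Set K),
      (frobeniusAlgHom k K)^[l ^ N * R.natDegree !] z - z ∈ O.nonunits →
        (frobeniusAlgHom k K)^[l ^ N * R.natDegree !] z - z = 0) :
    IsPrimaryAffine S f g := by
  let ev : O →+* Ω := ι.comp (IsLocalRing.residue O)
  have : IsLocalHom ev := RingHom.isLocalHom_comp _ _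
  let _ : Algebra k Ω :=
    (ev.comp ((algebraMap k K).codRestrict O.toSubring hO.algebraMap_mem)).toAlgebra
  have hk (c : k) : HasResidue ev (algebraMap k K c) (algebraMap k Ω c) :=
    ⟨⟨_, hO.algebraMap_mem c⟩, rfl, rfl⟩
  obtain ⟨a, b, ha, hb, haM, hbM, hres_a, hres_b⟩ :=
    exists_hasResidue_affine_of_isPrimaryAffine hl hS hP hdeg hR hRdeg hMdeg hfg
      hO.aeval_mem_nonunits hk ⟨_, rfl, rfl⟩ ⟨_, rfl, rfl⟩ hres
  have hM : l ^ N * R.natDegree ! ≠ 0 :=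
    mul_ne_zero (pow_ne_zero N hl.ne_zero) (Nat.factorial_ne_zero _)
  exact isPrimaryAffine_of_primaryOutside_affine
    (hres_a.primaryOutside ha hM haM (hfix _ (.inl rfl)))
    (hres_b.primaryOutside hb hM hbM (hfix _ (.inr rfl)))

theorem prop_3_11_general (p : ℕ) [CharP k p] (htr : Algebra.trdeg k K ≤ 1) {S : Set ℕ}
    (hlarge : IsLargeFor (Fintype.card k) p S) {f g : K} (hg : Transcendental k g)
    (hQ : {O : ValuationSubring K | (∀ c : k, algebraMap k K c ∈ O) ∧ O ≠ ⊤ ∧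
      ∃ (hfO : f ∈ O) (hgO : g ∈ O),
        ¬ IsPrimaryAffine S
          (algebraMap (IsLocalRing.ResidueField O) (AlgebraicClosure (IsLocalRing.ResidueField O))
            (IsLocalRing.residue O ⟨f, hfO⟩))
          (algebraMap (IsLocalRing.ResidueField O) (AlgebraicClosure (IsLocalRing.ResidueField O))
            (IsLocalRing.residue O ⟨g, hgO⟩))}.Finite) :
    IsPrimaryAffine S f g := by
  obtain ⟨l, N, hl, hS⟩ := hlarge.exists_ordersAvoid_prime_pow
  obtain ⟨R, hR, hfg⟩ := exists_ne_zero_eval₂_aeval_eq_zero htr hg f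
  obtain ⟨P, O, hP, hdeg, hO, hinj⟩ := exists_isPlaceOver_natDegree_eq_pow hg hl.one_lt
  have htop : Tendsto (fun n => (P n).natDegree) atTop atTop := by
    simpa only [hdeg] using tendsto_pow_atTop_atTop_of_one_lt hl.one_lt
  have hvanish := eventually_eq_zero_of_mem_nonunits htr hg hP htop hO
  set F := (frobeniusAlgHom k K)^[l ^ N * R.natDegree !]
  have hfix : ∀ᶠ n in atTop, ∀ z ∈ ({affineIntercept F f g, affineSlope F f g} : Set K),
      F z - z ∈ (O n).nonunits → F z - z = 0 :=
    (Set.toFinite _).eventually_all.mpr fun z _ => hvanish (F z - z)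
  have hgood := hinj.tendsto_cofinite.eventually hQ.eventually_cofinite_notMem
  rw [Nat.cofinite_eq_atTop] at hgood
  obtain ⟨n, hQn, hfixn, hfn, hRn, hMn⟩ := (hgood.and <| hfix.and <|
    (eventually_mem_of_isPlaceOver htr hg hP htop hO f).and <|
    (htop.eventually_gt_atTop R.leadingCoeff.natDegree).and <|
    htop.eventually_gt_atTop (l ^ N * R.natDegree !)).exists
  refine (hO n).isPrimaryAffine hl hS (hP n) (hdeg n) hR hRn hMn hfg hfn
    (algebraMap _ (AlgebraicClosure (IsLocalRing.ResidueField (O n)))) (by_contra fun hres => ?_)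
    hfixn
  exact hQn ⟨(hO n).algebraMap_mem, (hO n).ne_top hg (hP n).ne_zero, hfn, (hO n).mem, hres⟩

end Descent

/-- **Proposition 3.11 (combined with the descent of Definition/Proposition 3.5),
`Q̄_{1,Σ} ⟹ P_Σ`.** Let `K` be a function field of one variable over a finite field `k`
of cardinality `q` and characteristic `p`, and let `S` be a `k`-large set of primes. If
`f, g ∈ K ∖ k` are such that for all but finitely many places `O` of `K` with
`f, g ∈ O` one has `f(O) = a + b·g(O)` in an algebraic closure of the residue field for
some nonzero `a, b` of `S'`-primary order, then `f = a + b·g` for some `a, b ∈ k^×` of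
`S'`-primary order. -/
theorem prop_3_11
    (k K : Type) [Field k] [Fintype k] [Field K] [Algebra k K]
    (p q : ℕ) (hp : p.Prime) [CharP k p] (hq : q = Fintype.card k)
    (hK : IsFunctionFieldOneVar k K)
    (S : Set ℕ) (hlarge : IsLargeFor q p S)
    (f g : K) (hf : f ∉ (algebraMap k K).range) (hg : g ∉ (algebraMap k K).range)
    (hQ : {O : ValuationSubring K |
      (∀ c : k, algebraMap k K c ∈ O) ∧ O ≠ ⊤ ∧
      ∃ (hfO : f ∈ O) (hgO : g ∈ O),
        ¬ ∃ a b : AlgebraicClosure (IsLocalRing.ResidueField ↥O),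
          a ≠ 0 ∧ b ≠ 0 ∧ PrimaryOutside S a ∧ PrimaryOutside S b ∧
          algebraMap (IsLocalRing.ResidueField ↥O) (AlgebraicClosure (IsLocalRing.ResidueField ↥O))
              (IsLocalRing.residue ↥O ⟨f, hfO⟩) =
            a + b * algebraMap (IsLocalRing.ResidueField ↥O)
              (AlgebraicClosure (IsLocalRing.ResidueField ↥O))
              (IsLocalRing.residue ↥O ⟨g, hgO⟩)}.Finite) :
    ∃ a b : k, a ≠ 0 ∧ b ≠ 0 ∧ PrimaryOutside S a ∧ PrimaryOutside S b ∧
      f = algebraMap k K a + algebraMap k K b * g := by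
  subst hq
  exact (prop_3_11_general p hK.trdeg_le_one hlarge (fun h => hg (hK.2 g h))
    hQ).exists_eq_algebraMap_add_algebraMap_mul hK.2
end

section
/- (Descent step of Definition/Proposition 3.12 (i)) Let m be a positive integer, k a finite field, and K a field extension of k in which k is algebraically closed. Let K̄ be an algebraic closure of K and let k̄ be the algebraic closure of k inside K̄. Let f, g ∈ K with g ∉ k, and suppose a, c ∈ k̄ are nonzero and satisfy f = a·(1 + c·g)^m in K̄. Then a, c ∈ k. In particular, for any set Σ of prime numbers, if a and c have Σ'-primary order then f = a·(1 + c·g)^m with a, c ∈ k^× of Σ'-primary order. -/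
/-!
Two embeddings over `K` of a subextension containing `a` and `c` send `f = a (1 + c g) ^ m` to the
same element. Since `g` is transcendental over `k`, the coefficients of such an expression are
determined by its value: the quotient of two candidates for `1 + c g` has an `m`-th power algebraic
over `k`, so it is itself algebraic, and comparing coefficients of `1` and `g` forces it to be `1`.
Hence `K(a, c)` has only one embedding over `K` into an algebraic closure. Being separable over `K`,
it is equal to `K`, so `a` and `c` are elements of `K` algebraic over `k`, that is, elements of `k`.
-/

theorem PrimaryOutside.map_iff {S : Set ℕ} {M N : Type*} [Monoid M] [Monoid N] {φ : M →* N}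
    (hφ : Function.Injective φ) {x : M} : PrimaryOutside S (φ x) ↔ PrimaryOutside S x := by
  simp only [PrimaryOutside, hφ.isOfFinOrder_iff, orderOf_injective φ hφ]

section Transcendental

variable {k E : Type*} [Field k] [Field E] [Algebra k E] {g : E}

theorem eq_zero_and_eq_zero_of_add_mul_transcendental_eq_zero (hg : Transcendental k g) {u v : E}
    (hu : IsAlgebraic k u) (hv : IsAlgebraic k v) (h : u + v * g = 0) : u = 0 ∧ v = 0 := by
  have hv0 : v = 0 := by
    by_contra hv0
    have hgv : g = -u * v⁻¹ := by
      rw [eq_mul_inv_iff_mul_eq₀ hv0]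
      linear_combination h
    exact hg (hgv ▸ hu.neg.mul hv.inv)
  exact ⟨by simpa [hv0] using h, hv0⟩

theorem eq_and_eq_of_mul_one_add_mul_transcendental_pow_eq (hg : Transcendental k g)
    {m : ℕ} (hm : m ≠ 0) {a c a' c' : E} (ha : IsAlgebraic k a) (hc : IsAlgebraic k c)
    (ha' : IsAlgebraic k a') (hc' : IsAlgebraic k c') (ha0 : a ≠ 0)
    (h : a * (1 + c * g) ^ m = a' * (1 + c' * g) ^ m) : a = a' ∧ c = c' := by
  have hne : 1 + c' * g ≠ 0 := fun h0 ↦ one_ne_zero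
    (eq_zero_and_eq_zero_of_add_mul_transcendental_eq_zero hg isAlgebraic_one hc' h0).1
  obtain ⟨t, ht⟩ : ∃ t, 1 + c * g = t * (1 + c' * g) := ⟨_, (div_mul_cancel₀ _ hne).symm⟩
  have htm : t ^ m = a' * a⁻¹ := by
    rw [eq_mul_inv_iff_mul_eq₀ ha0]
    apply mul_right_cancel₀ (pow_ne_zero m hne)
    rw [← h, ht, mul_pow]
    ring
  have htalg : IsAlgebraic k t := .of_pow (Nat.pos_of_ne_zero hm) (htm ▸ ha'.mul ha.inv)
  obtain ⟨h1t, hct⟩ := eq_zero_and_eq_zero_of_add_mul_transcendental_eq_zero hg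
    (isAlgebraic_one.sub htalg) (hc.sub (htalg.mul hc')) (by linear_combination ht)
  obtain rfl : t = 1 := (sub_eq_zero.mp h1t).symm
  rw [one_mul] at ht hct
  exact ⟨mul_right_cancel₀ (pow_ne_zero m hne) (ht ▸ h), sub_eq_zero.mp hct⟩

end Transcendental

section Descent

open IntermediateField

theorem adjoin_eq_bot_of_forall_emb_eqOn {K E : Type*} [Field K] [Field E] [Algebra K E]
    {s : Set E} (hs : ∀ x ∈ s, IsSeparable K x)
    (h : ∀ (σ τ : Field.Emb K (adjoin K s)) (x : E) (hx : x ∈ s),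
      σ ⟨x, subset_adjoin K s hx⟩ = τ ⟨x, subset_adjoin K s hx⟩) :
    adjoin K s = ⊥ := by
  have : Algebra.IsSeparable K (adjoin K s) := (isSeparable_adjoin_iff_isSeparable K E).mpr hs
  have : IsPurelyInseparable K (adjoin K s) :=
    (isPurelyInseparable_iff_subsingleton_emb K _).mpr ⟨fun σ τ ↦ adjoin_algHom_ext K (h σ τ)⟩
  exact eq_bot_of_isPurelyInseparable_of_isSeparable _

variable {k K E : Type*} [Field k] [Field K] [Field E] [Algebra k K] [Algebra K E] [Algebra k E]
  [IsScalarTower k K E] {m : ℕ} {f g : K} {a c : E}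

theorem algHom_eq_and_eq_of_algebraMap_eq_mul_one_add_mul_pow {Ω : Type*} [Field Ω] [Algebra K Ω]
    (hm : m ≠ 0) (hg : Transcendental k g) (ha : IsAlgebraic k a) (hc : IsAlgebraic k c)
    (ha0 : a ≠ 0) (heq : algebraMap K E f = a * (1 + c * algebraMap K E g) ^ m)
    (σ τ : E →ₐ[K] Ω) : σ a = τ a ∧ σ c = τ c := by
  let : Algebra k Ω := Algebra.compHom Ω (algebraMap k K)
  have : IsScalarTower k K Ω := .of_algebraMap_eq fun _ ↦ rfl
  have hgΩ : Transcendental k (algebraMap K Ω g) :=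
    (transcendental_algebraMap_iff (algebraMap K Ω).injective).mpr hg
  have map_eq (ρ : E →ₐ[K] Ω) :
      algebraMap K Ω f = ρ a * (1 + ρ c * algebraMap K Ω g) ^ m := by
    simpa using congrArg ρ heq
  have map_alg (ρ : E →ₐ[K] Ω) {x : E} (hx : IsAlgebraic k x) : IsAlgebraic k (ρ x) :=
    hx.algHom (ρ.restrictScalars k)
  exact eq_and_eq_of_mul_one_add_mul_transcendental_pow_eq hgΩ hm (map_alg σ ha) (map_alg σ hc)
    (map_alg τ ha) (map_alg τ hc) ((map_ne_zero σ).mpr ha0) ((map_eq σ).symm.trans (map_eq τ))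

theorem adjoin_pair_eq_bot_of_algebraMap_eq_mul_one_add_mul_pow (hm : m ≠ 0)
    (hg : Transcendental k g) (ha : IsSeparable k a) (hc : IsSeparable k c) (ha0 : a ≠ 0)
    (heq : algebraMap K E f = a * (1 + c * algebraMap K E g) ^ m) : K⟮a, c⟯ = ⊥ := by
  have hsep : ∀ x ∈ ({a, c} : Set E), IsSeparable K x := by
    rintro x (rfl | rfl)
    exacts [ha.tower_top K, hc.tower_top K]
  have isAlgebraic_of_coe {x : K⟮a, c⟯} (hx : IsSeparable k (x : E)) : IsAlgebraic k x :=
    (isAlgebraic_algHom_iff (K⟮a, c⟯.val.restrictScalars k) Subtype.val_injective).mp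
      hx.isIntegral.isAlgebraic
  let a' : K⟮a, c⟯ := ⟨a, subset_adjoin K _ (.inl rfl)⟩
  let c' : K⟮a, c⟯ := ⟨c, subset_adjoin K _ (.inr rfl)⟩
  have ha0' : a' ≠ 0 := fun h ↦ ha0 (congrArg Subtype.val h)
  have heq' : algebraMap K K⟮a, c⟯ f = a' * (1 + c' * algebraMap K K⟮a, c⟯ g) ^ m :=
    Subtype.ext heq
  refine adjoin_eq_bot_of_forall_emb_eqOn hsep fun σ τ ↦ ?_
  obtain ⟨hσa, hσc⟩ := algHom_eq_and_eq_of_algebraMap_eq_mul_one_add_mul_pow hm hg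
    (isAlgebraic_of_coe (x := a') ha) (isAlgebraic_of_coe (x := c') hc) ha0' heq' σ τ
  rintro x (rfl | rfl)
  exacts [hσa, hσc]

theorem exists_algebraMap_eq_of_isAlgebraic_of_mem_bot
    (halg : ∀ x : K, IsAlgebraic k x → x ∈ (algebraMap k K).range)
    {x : E} (hx : IsAlgebraic k x) (hxK : x ∈ (⊥ : IntermediateField K E)) :
    ∃ y : k, algebraMap k E y = x := by
  obtain ⟨z, rfl⟩ := mem_bot.mp hxK
  obtain ⟨y, rfl⟩ := halg z ((isAlgebraic_algebraMap_iff (algebraMap K E).injective).mp hx)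
  exact ⟨y, IsScalarTower.algebraMap_apply k K E y⟩

theorem descent_power_general (hm : m ≠ 0)
    (halg : ∀ x : K, IsAlgebraic k x → x ∈ (algebraMap k K).range)
    (hg : g ∉ (algebraMap k K).range) (ha : IsSeparable k a) (hc : IsSeparable k c)
    (ha0 : a ≠ 0) (hc0 : c ≠ 0)
    (heq : algebraMap K E f = a * (1 + c * algebraMap K E g) ^ m) :
    ∃ a₀ c₀ : k, algebraMap k E a₀ = a ∧ algebraMap k E c₀ = c ∧ a₀ ≠ 0 ∧ c₀ ≠ 0 ∧
      f = algebraMap k K a₀ * (1 + algebraMap k K c₀ * g) ^ m ∧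
      ∀ S : Set ℕ,
        (PrimaryOutside S a → PrimaryOutside S a₀) ∧
        (PrimaryOutside S c → PrimaryOutside S c₀) := by
  have hadj : K⟮a, c⟯ = ⊥ := adjoin_pair_eq_bot_of_algebraMap_eq_mul_one_add_mul_pow hm
    (fun h ↦ hg (halg g h)) ha hc ha0 heq
  obtain ⟨a₀, rfl⟩ := exists_algebraMap_eq_of_isAlgebraic_of_mem_bot halg
    ha.isIntegral.isAlgebraic (hadj ▸ subset_adjoin K _ (.inl rfl))
  obtain ⟨c₀, rfl⟩ := exists_algebraMap_eq_of_isAlgebraic_of_mem_bot halg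
    hc.isIntegral.isAlgebraic (hadj ▸ subset_adjoin K _ (.inr rfl))
  have hinj : Function.Injective (algebraMap k E : k →* E) := (algebraMap k E).injective
  refine ⟨a₀, c₀, rfl, rfl, (map_ne_zero _).mp ha0, (map_ne_zero _).mp hc0, ?_,
    fun S ↦ ⟨(PrimaryOutside.map_iff hinj).mp, (PrimaryOutside.map_iff hinj).mp⟩⟩
  apply (algebraMap K E).injective
  simpa [← IsScalarTower.algebraMap_apply k K E] using heq

end Descent

/-- **Descent step of Definition/Proposition 3.12 (i) (`P̄_Σ^{(m)} ⟹ P_Σ^{(m)}`).**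
Let `k` be a finite field algebraically closed in `K`, let `K̄` be an algebraic closure of
`K` and `k̄` the algebraic closure of `k` inside `K̄` (elements algebraic over `k`). If
`f, g ∈ K` with `g ∉ k` and `f = a·(1 + c·g)^m` with `a, c ∈ k̄` nonzero, then
`a, c ∈ k`; in particular if `a, c` are of `Σ'`-primary order then `f = a·(1 + c·g)^m`
with `a, c ∈ k^×` of `Σ'`-primary order. -/
theorem descent_power
    (m : ℕ) (hm : 0 < m)
    (k K Kbar : Type) [Field k] [Finite k] [Field K] [Algebra k K]
    [Field Kbar] [Algebra K Kbar] [IsAlgClosure K Kbar]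
    [Algebra k Kbar] [IsScalarTower k K Kbar]
    (halg : ∀ x : K, IsAlgebraic k x → x ∈ (algebraMap k K).range)
    (f g : K) (hg : g ∉ (algebraMap k K).range)
    (a c : Kbar) (ha : IsAlgebraic k a) (hc : IsAlgebraic k c)
    (ha0 : a ≠ 0) (hc0 : c ≠ 0)
    (heq : algebraMap K Kbar f = a * (1 + c * algebraMap K Kbar g) ^ m) :
    ∃ a₀ c₀ : k, algebraMap k Kbar a₀ = a ∧ algebraMap k Kbar c₀ = c ∧
      a₀ ≠ 0 ∧ c₀ ≠ 0 ∧
      f = algebraMap k K a₀ * (1 + algebraMap k K c₀ * g) ^ m ∧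
      ∀ S : Set ℕ,
        (PrimaryOutside S a → PrimaryOutside S a₀) ∧
        (PrimaryOutside S c → PrimaryOutside S c₀) :=
  descent_power_general hm.ne' halg hg
    (PerfectField.separable_of_irreducible (minpoly.irreducible ha.isIntegral))
    (PerfectField.separable_of_irreducible (minpoly.irreducible hc.isIntegral)) ha0 hc0 heq
end
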